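/- Assume condition (R), let Ψ_{γ,σ}(x;q) = x^{γ+1} λ_{γ,σ}(x;q), and let ξ_{γ,σ,n}(q) denote the n-th positive zero of Ψ_{γ,σ}'(·;q). Then the Rayleigh sums of the zeros satisfy Σ_{n≥1} ξ_{γ,σ,n}(q)^{−2} = σ²(γ+3)Γ_q(γ+1)/((γ+1)Γ_q(γ+3)) and Σ_{n≥1} ξ_{γ,σ,n}(q)^{−4} = σ⁴(γ+3)²Γ_q(γ+1)²/((γ+1)²Γ_q(γ+3)²) − 2σ⁴q²(γ+5)Γ_q(γ+1)/((γ+1)Γ_q(γ+5)). -/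

import Mathlib

noncomputable def qPochInf (a q : ℝ) : ℝ := ∏' k : ℕ, (1 - a * q ^ k)

noncomputable def qGamma (q x : ℝ) : ℝ :=
  qPochInf q q * (1 - q) ^ (1 - x) / qPochInf (q ^ x) q

noncomputable def qML (γ σ q : ℝ) (z : ℂ) : ℂ :=
  ∑' n : ℕ,
    (((-1) ^ n * σ ^ (2 * n) * q ^ (n * (n - 1)) / qGamma q (2 * n + γ + 1) : ℝ) : ℂ) * z ^ (2 * n)

noncomputable def qMLR (γ σ q : ℝ) (x : ℝ) : ℝ :=
  ∑' n : ℕ,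
    ((-1) ^ n * σ ^ (2 * n) * q ^ (n * (n - 1)) / qGamma q (2 * n + γ + 1)) * x ^ (2 * n)

def condR (q γ : ℝ) : Prop :=
  (γ = 0 ∨ γ = 1) ∨
    (γ ∈ Set.Ioo (0 : ℝ) 2 ∧ γ ≠ 1 ∧
      1 < q⁻¹ * (1 - q) * (1 - q ^ (γ + 1)) * (1 - q ^ (γ + 2)))

noncomputable def radiusStarlike (α : ℝ) (f : ℂ → ℂ) : ℝ :=
  sSup {r : ℝ | 0 < r ∧ ∀ z : ℂ, 0 < ‖z‖ → ‖z‖ < r →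
    α < (z * deriv f z / f z).re}

noncomputable def radiusConvex (α : ℝ) (f : ℂ → ℂ) : ℝ :=
  sSup {r : ℝ | 0 < r ∧ ∀ z : ℂ, ‖z‖ < r →
    α < (1 + z * deriv (deriv f) z / deriv f z).re}

noncomputable def fML (γ σ q : ℝ) (z : ℂ) : ℂ :=
  Complex.exp ((1 / ((γ : ℂ) + 1)) *
    Complex.log (z ^ ((γ : ℂ) + 1) * (qGamma q (γ + 1) : ℂ) * qML γ σ q z))

noncomputable def gML (γ σ q : ℝ) (z : ℂ) : ℂ :=
  z * (qGamma q (γ + 1) : ℂ) * qML γ σ q z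

noncomputable def hML (γ σ q : ℝ) (z : ℂ) : ℂ :=
  z * (qGamma q (γ + 1) : ℂ) *
    ∑' n : ℕ,
      (((-1) ^ n * σ ^ (2 * n) * q ^ (n * (n - 1)) / qGamma q (2 * n + γ + 1) : ℝ) : ℂ) * z ^ n

noncomputable def hMLR (γ σ q : ℝ) (x : ℝ) : ℝ :=
  x * qGamma q (γ + 1) *
    ∑' n : ℕ,
      ((-1) ^ n * σ ^ (2 * n) * q ^ (n * (n - 1)) / qGamma q (2 * n + γ + 1)) * x ^ n

section Helpers
open Filter Topology Polynomial

/-- Entire power series coefficients. -/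
def Ent (c : ℕ → ℝ) : Prop := ∀ x : ℝ, Summable (fun m => |c m| * |x| ^ m)

noncomputable def Ser (c : ℕ → ℝ) (x : ℝ) : ℝ := ∑' m, c m * x ^ m

def dco (c : ℕ → ℝ) : ℕ → ℝ := fun m => ((m : ℝ) + 1) * c (m + 1)



theorem ent_bound {K ρ : ℝ} (hK : 0 ≤ K) (h0 : 0 ≤ ρ) (h1 : ρ < 1) :
    Ent (fun m => K ^ m * ρ ^ (m * (m - 1))) := by
  intro x
  have ht : Tendsto (fun m : ℕ => K * |x| * ρ ^ (m - 1)) atTop (𝓝 (K * |x| * 0)) := by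
    apply Tendsto.const_mul
    exact (tendsto_pow_atTop_nhds_zero_of_lt_one h0 h1).comp (tendsto_sub_atTop_nat 1)
  rw [mul_zero] at ht
  have hev : ∀ᶠ m : ℕ in atTop, K * |x| * ρ ^ (m - 1) < 1 / 2 :=
    ht.eventually (gt_mem_nhds (by norm_num))
  refine Summable.of_norm_bounded_eventually_nat (g := fun m => (1 / 2 : ℝ) ^ m)
    (summable_geometric_of_lt_one (by norm_num) (by norm_num)) ?_
  filter_upwards [hev] with m hm
  have : |K ^ m * ρ ^ (m * (m - 1))| * |x| ^ m = (K * |x| * ρ ^ (m - 1)) ^ m := by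
    rw [abs_of_nonneg (by positivity)]
    rw [mul_pow, mul_pow, ← pow_mul, mul_comm m (m - 1)]; ring
  rw [Real.norm_eq_abs, abs_of_nonneg (by positivity), this]
  exact pow_le_pow_left₀ (by positivity) hm.le m

theorem Ent.mono {c d : ℕ → ℝ} (hd : Ent d) (h : ∀ m, |c m| ≤ |d m|) : Ent c := by
  intro x
  refine Summable.of_nonneg_of_le (fun m => by positivity) (fun m => ?_) (hd x)
  exact mul_le_mul_of_nonneg_right (h m) (by positivity)

theorem Ent.dco {c : ℕ → ℝ} (hc : Ent c) : Ent (dco c) := by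
  intro x
  have h := (summable_nat_add_iff 1).2 (hc (2 * (|x| + 1)))
  refine Summable.of_nonneg_of_le (fun m => by positivity) (fun m => ?_) h
  have e1 : |2 * (|x| + 1)| = 2 * (|x| + 1) := abs_of_nonneg (by positivity)
  have e2 : |((m : ℝ) + 1)| = (m : ℝ) + 1 := abs_of_nonneg (by positivity)
  simp only [_root_.dco]
  rw [abs_mul, e1, e2, mul_comm ((m : ℝ) + 1), mul_assoc]
  apply mul_le_mul_of_nonneg_left _ (abs_nonneg _)
  rw [mul_pow]
  have h2 : ((m : ℝ) + 1) ≤ 2 ^ (m + 1) := by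
    have : m + 1 < 2 ^ (m + 1) := Nat.lt_two_pow_self
    exact_mod_cast this.le
  have h3 : |x| ^ m ≤ (|x| + 1) ^ (m + 1) := by
    calc |x| ^ m ≤ (|x| + 1) ^ m := pow_le_pow_left₀ (abs_nonneg _) (by linarith) m
      _ ≤ (|x| + 1) ^ (m + 1) := pow_le_pow_right₀ (by linarith [abs_nonneg x]) (by omega)
  exact mul_le_mul h2 h3 (by positivity) (by positivity)

theorem Ent.summable {c : ℕ → ℝ} (hc : Ent c) (x : ℝ) : Summable (fun m => c m * x ^ m) := by
  refine Summable.of_norm ?_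
  simpa [abs_mul, abs_pow] using hc x

theorem Ent.hasDerivAt {c : ℕ → ℝ} (hc : Ent c) (x : ℝ) :
    HasDerivAt (Ser c) (Ser (_root_.dco c) x) x := by
  have hd := hc.dco (|x| + 1)
  have hu : Summable (fun m : ℕ => |c m| * ((m : ℝ) * (|x| + 1) ^ (m - 1))) := by
    rw [← summable_nat_add_iff 1]
    refine hd.congr (fun m => ?_)
    simp only [_root_.dco]
    rw [abs_mul, abs_of_nonneg (by positivity : (0 : ℝ) ≤ (m : ℝ) + 1),
      abs_of_nonneg (by positivity : (0 : ℝ) ≤ |x| + 1)]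
    push_cast
    ring
  have key := hasDerivAt_tsum_of_isPreconnected (𝕜 := ℝ) (F := ℝ) (α := ℕ)
    (g := fun m y => c m * y ^ m) (g' := fun m y => c m * ((m : ℝ) * y ^ (m - 1)))
    (t := Metric.ball 0 (|x| + 1)) (y₀ := 0) (y := x) hu Metric.isOpen_ball
    (convex_ball _ _).isPreconnected
    (fun m y _ => by simpa using (hasDerivAt_pow m y).const_mul (c m))
    (fun m y hy => by
      rw [Real.norm_eq_abs, abs_mul, abs_mul, abs_pow, Nat.abs_cast]
      have : |y| ≤ |x| + 1 := by
        rw [mem_ball_zero_iff] at hy; exact hy.le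
      gcongr)
    (by simp; positivity) (hc.summable 0) (by simp)
  have e : (∑' m, c m * ((m : ℝ) * x ^ (m - 1))) = Ser (_root_.dco c) x := by
    have hs : Summable (fun m => c m * ((m : ℝ) * x ^ (m - 1))) := by
      rw [← summable_nat_add_iff 1]
      refine (hc.dco.summable x).congr (fun m => ?_)
      simp only [_root_.dco]; push_cast; ring_nf
    rw [hs.tsum_eq_zero_add]
    simp only [Ser, _root_.dco]
    simp only [Nat.cast_zero, zero_mul, mul_zero, zero_add]
    refine tsum_congr (fun m => ?_)
    push_cast; ring_nf
  rw [e] at key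
  exact key

theorem ser_tendsto {d : ℕ → ℝ} (hd : Ent d) {cN : ℕ → ℕ → ℝ} {c : ℕ → ℝ}
    (hb : ∀ N m, |cN N m| ≤ |d m|) (hc : ∀ m, Tendsto (fun N => cN N m) atTop (𝓝 (c m))) (x : ℝ) :
    Tendsto (fun N => Ser (cN N) x) atTop (𝓝 (Ser c x)) := by
  refine tendsto_tsum_of_dominated_convergence (hd x) (fun m => (hc m).mul_const _)
    (Eventually.of_forall fun N m => ?_)
  rw [Real.norm_eq_abs, abs_mul, abs_pow]
  exact mul_le_mul_of_nonneg_right (hb N m) (by positivity)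

theorem eval_eq_ser (P : ℝ[X]) (x : ℝ) : P.eval x = Ser P.coeff x := by
  rw [Polynomial.eval_eq_sum, Polynomial.sum, Ser, tsum_eq_sum]
  intro m hm
  simp [Polynomial.notMem_support_iff.1 hm]

theorem coeff_deriv (P : ℝ[X]) : (derivative P).coeff = dco P.coeff := by
  ext m
  rw [coeff_derivative, dco, mul_comm]

noncomputable def pp (l : List ℝ) : ℝ[X] := (l.map (fun a => 1 - C a * X)).prod

theorem pp_nil : pp [] = 1 := rfl
theorem pp_cons (a : ℝ) (l : List ℝ) : pp (a :: l) = (1 - C a * X) * pp l := by simp [pp]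

theorem pp_cons_coeff_succ (a : ℝ) (l : List ℝ) (m : ℕ) :
    (pp (a :: l)).coeff (m + 1) = (pp l).coeff (m + 1) - a * (pp l).coeff m := by
  rw [pp_cons, sub_mul, one_mul, coeff_sub, mul_assoc, coeff_C_mul, coeff_X_mul]

theorem pp_coeff_zero (l : List ℝ) : (pp l).coeff 0 = 1 := by
  induction l with
  | nil => simp [pp_nil]
  | cons a l ih => rw [pp_cons, mul_coeff_zero, ih]; simp

theorem pp_coeff_one (l : List ℝ) : (pp l).coeff 1 = - l.sum := by
  induction l with
  | nil => simp [pp_nil, coeff_one]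
  | cons a l ih => rw [pp_cons_coeff_succ, ih, pp_coeff_zero]; simp; ring

theorem pp_sq (l : List ℝ) :
    (l.map (fun a => a ^ 2)).sum = (pp l).coeff 1 ^ 2 - 2 * (pp l).coeff 2 := by
  induction l with
  | nil => simp [pp_nil, coeff_one]
  | cons a l ih =>
    rw [List.map_cons, List.sum_cons, ih, pp_cons_coeff_succ, pp_cons_coeff_succ,
      pp_coeff_zero]; simp; ring

theorem pp_coeff_nonneg (l : List ℝ) (hl : ∀ a ∈ l, 0 ≤ a) (m : ℕ) :
    0 ≤ (-1) ^ m * (pp l).coeff m := by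
  induction l generalizing m with
  | nil => rcases m with _ | m <;> simp [pp_nil, coeff_one]
  | cons a l ih =>
    have ha := hl a (by simp)
    have ih := ih (fun b hb => hl b (by simp [hb]))
    rcases m with _ | m
    · simp [pp_coeff_zero]
    · rw [pp_cons_coeff_succ]
      have h1 := ih (m + 1)
      have h2 := mul_nonneg ha (ih m)
      have : (-1) ^ (m + 1) * ((pp l).coeff (m + 1) - a * (pp l).coeff m)
        = (-1) ^ (m + 1) * (pp l).coeff (m + 1) + a * ((-1) ^ m * (pp l).coeff m) := by ring
      linarith

theorem pp_coeff_ge (l : List ℝ) (hl : ∀ a ∈ l, 0 ≤ a) (m : ℕ) :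
    ∏ k ∈ Finset.range m, l.getD k 0 ≤ (-1) ^ m * (pp l).coeff m := by
  induction l generalizing m with
  | nil => rcases m with _ | m <;> simp [pp_nil, coeff_one]
  | cons a l ih =>
    have ha := hl a (by simp)
    have hl' : ∀ b ∈ l, 0 ≤ b := fun b hb => hl b (by simp [hb])
    have ih := ih hl'
    rcases m with _ | m
    · simp [pp_coeff_zero]
    · rw [pp_cons_coeff_succ, Finset.prod_range_succ']
      simp only [List.getD_cons_succ, List.getD_cons_zero]
      have h1 := pp_coeff_nonneg l hl' (m + 1)
      have h2 := mul_le_mul_of_nonneg_left (ih m) ha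
      have : (-1) ^ (m + 1) * ((pp l).coeff (m + 1) - a * (pp l).coeff m)
        = (-1) ^ (m + 1) * (pp l).coeff (m + 1) + a * ((-1) ^ m * (pp l).coeff m) := by ring
      linarith

theorem getD_nonneg (l : List ℝ) (hl : ∀ a ∈ l, 0 ≤ a) (k : ℕ) : 0 ≤ l.getD k 0 := by
  rcases lt_or_ge k l.length with h | h
  · rw [List.getD_eq_getElem _ _ h]; exact hl _ (List.getElem_mem h)
  · rw [List.getD_eq_default _ _ h]

theorem getD_anti (l : List ℝ) (hl : ∀ a ∈ l, 0 ≤ a) (hs : l.Pairwise (· ≥ ·)) {i k : ℕ}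
    (hik : i ≤ k) : l.getD k 0 ≤ l.getD i 0 := by
  rcases lt_or_ge k l.length with h | h
  · rcases hik.eq_or_lt with rfl | h2
    · exact le_rfl
    · rw [List.getD_eq_getElem _ _ h, List.getD_eq_getElem _ _ (h2.trans h)]
      exact List.pairwise_iff_getElem.1 hs i k _ _ h2
  · rw [List.getD_eq_default _ _ h]; exact getD_nonneg l hl i

theorem getD_bound (l : List ℝ) (hl : ∀ a ∈ l, 0 ≤ a) (hs : l.Pairwise (· ≥ ·)) {K ρ : ℝ}
    (hK : 0 ≤ K) (h0 : 0 ≤ ρ) (hb : ∀ m, |(pp l).coeff m| ≤ K ^ m * ρ ^ (m * (m - 1))) (k : ℕ) :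
    l.getD k 0 ≤ K * ρ ^ k := by
  have h1 : (l.getD k 0) ^ (k + 1) ≤ ∏ i ∈ Finset.range (k + 1), l.getD i 0 := by
    calc (l.getD k 0) ^ (k + 1) = ∏ i ∈ Finset.range (k + 1), l.getD k 0 := by simp
      _ ≤ _ := Finset.prod_le_prod (fun i _ => getD_nonneg l hl k)
        (fun i hi => getD_anti l hl hs (by simp at hi; omega))
  have h2 := pp_coeff_ge l hl (k + 1)
  have h3 : (-1) ^ (k + 1) * (pp l).coeff (k + 1) ≤ |(pp l).coeff (k + 1)| := by
    refine (le_abs_self _).trans ?_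
    rw [abs_mul]; simp
  have h4 : (l.getD k 0) ^ (k + 1) ≤ (K * ρ ^ k) ^ (k + 1) := by
    calc _ ≤ _ := h1.trans (h2.trans (h3.trans (hb (k + 1))))
      _ = _ := by rw [mul_pow, ← pow_mul]; simp [mul_comm]
  exact le_of_pow_le_pow_left₀ (by omega) (by positivity) h4

theorem pp_eval (l : List ℝ) (x : ℝ) {n : ℕ} (hn : l.length ≤ n) :
    (pp l).eval x = ∏ k ∈ Finset.range n, (1 - l.getD k 0 * x) := by
  induction l generalizing n with
  | nil => simp [pp_nil]
  | cons a l ih =>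
    rcases n with _ | n
    · simp at hn
    · rw [Finset.prod_range_succ', pp_cons, eval_mul, ih (n := n) (by simpa using hn)]
      simp; ring

theorem getD_tsum (l : List ℝ) (g : ℝ → ℝ) (hg : g 0 = 0) :
    ∑' k, g (l.getD k 0) = (l.map g).sum := by
  rw [tsum_eq_sum (s := Finset.range l.length)]
  · induction l with
    | nil => simp
    | cons a l ih =>
      rw [List.length_cons, Finset.sum_range_succ']
      simp only [List.getD_cons_succ, List.getD_cons_zero, List.map_cons, List.sum_cons]
      rw [ih]; ring
  · intro k hk
    rw [List.getD_eq_default _ _ (by simpa using hk), hg]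

theorem prod_lower {v : ℕ → ℝ} (n : ℕ) (s : Finset ℕ) (h0 : ∀ k, 0 ≤ v k)
    (h : ∑ k ∈ s, v k ≤ 1) : 1 - ∑ k ∈ s, v k ≤ ∏ k ∈ s, (1 - v k) := by
  classical
  induction s using Finset.induction_on with
  | empty => simp
  | insert a s ha ih =>
    rw [Finset.sum_insert ha] at h ⊢
    rw [Finset.prod_insert ha]
    have hs : 0 ≤ ∑ k ∈ s, v k := Finset.sum_nonneg fun k _ => h0 k
    have := ih (by linarith [h0 a])
    have h3 : v a ≤ 1 := by linarith
    nlinarith [h0 a, mul_le_mul_of_nonneg_left this (by linarith : 0 ≤ 1 - v a),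
      mul_nonneg (h0 a) hs]

theorem pp_upper (l : List ℝ) (hl : ∀ a ∈ l, 0 ≤ a) {B : ℕ → ℝ} (hB : Summable B)
    (hlB : ∀ k, l.getD k 0 ≤ B k) (x : ℝ) {j k : ℕ} (hjk : j ≠ k) :
    |(pp l).eval x| ≤ |1 - l.getD j 0 * x| * |1 - l.getD k 0 * x| * Real.exp ((∑' k, B k) * |x|) := by
  set n := l.length + j + k + 1
  rw [pp_eval l x (n := n) (by omega), Finset.abs_prod]
  have hj : j ∈ Finset.range n := by simp; omega
  have hk : k ∈ (Finset.range n).erase j := by simp [hjk.symm]; omega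
  rw [← Finset.mul_prod_erase _ _ hj, ← Finset.mul_prod_erase _ _ hk, ← mul_assoc]
  apply mul_le_mul_of_nonneg_left _ (by positivity)
  have hv := getD_nonneg l hl
  calc ∏ i ∈ ((Finset.range n).erase j).erase k, |1 - l.getD i 0 * x|
      ≤ ∏ i ∈ ((Finset.range n).erase j).erase k, Real.exp (B i * |x|) := by
        refine Finset.prod_le_prod (fun i _ => abs_nonneg _) (fun i _ => ?_)
        have h1 : |1 - l.getD i 0 * x| ≤ 1 + l.getD i 0 * |x| := by
          refine (abs_sub _ _).trans ?_
          rw [abs_one, abs_mul, abs_of_nonneg (hv i)]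
        have h2 := Real.add_one_le_exp (B i * |x|)
        have h3 := mul_le_mul_of_nonneg_right (hlB i) (abs_nonneg x)
        linarith
    _ = Real.exp (∑ i ∈ ((Finset.range n).erase j).erase k, B i * |x|) := (Real.exp_sum _ _).symm
    _ ≤ _ := by
      apply Real.exp_le_exp.2
      rw [← Finset.sum_mul]
      apply mul_le_mul_of_nonneg_right _ (abs_nonneg x)
      exact hB.sum_le_tsum _ (fun i _ => (hv i).trans (hlB i))

theorem pp_lower (l : List ℝ) (hl : ∀ a ∈ l, 0 ≤ a) {B : ℕ → ℝ} (hB : Summable B)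
    (hlB : ∀ k, l.getD k 0 ≤ B k) (x : ℝ) {M : ℕ} (hM : (∑' k, B (k + M)) * |x| ≤ 1 / 2) :
    (∏ k ∈ Finset.range M, |1 - l.getD k 0 * x|) * (1 / 2) ≤ |(pp l).eval x| := by
  set n := l.length
  have hv := getD_nonneg l hl
  rw [pp_eval l x (n := M + n) (by omega), Finset.abs_prod, Finset.prod_range_add]
  apply mul_le_mul_of_nonneg_left _ (Finset.prod_nonneg fun _ _ => abs_nonneg _)
  have hs : ∑ i ∈ Finset.range n, l.getD (M + i) 0 * |x| ≤ 1 / 2 := by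
    rw [← Finset.sum_mul]
    refine le_trans ?_ hM
    apply mul_le_mul_of_nonneg_right _ (abs_nonneg x)
    calc ∑ i ∈ Finset.range n, l.getD (M + i) 0 ≤ ∑ i ∈ Finset.range n, B (i + M) :=
          Finset.sum_le_sum fun i _ => by rw [add_comm i M]; exact hlB _
      _ ≤ _ := ((summable_nat_add_iff M).2 hB).sum_le_tsum _ (fun i _ => (hv _).trans (hlB _))
  have h0 : ∀ i, 0 ≤ l.getD (M + i) 0 * |x| := fun i => mul_nonneg (hv _) (abs_nonneg x)
  have h1 := prod_lower (v := fun i => l.getD (M + i) 0 * |x|) n (Finset.range n) h0 (by linarith)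
  have h2 : ∏ i ∈ Finset.range n, (1 - l.getD (M + i) 0 * |x|)
      ≤ ∏ i ∈ Finset.range n, |1 - l.getD (M + i) 0 * x| := by
    refine Finset.prod_le_prod (fun i hi => ?_) (fun i _ => ?_)
    · have := Finset.single_le_sum (f := fun i => l.getD (M + i) 0 * |x|) (fun i _ => h0 i) hi
      linarith
    · have : l.getD (M + i) 0 * x ≤ l.getD (M + i) 0 * |x| :=
        mul_le_mul_of_nonneg_left (le_abs_self x) (hv _)
      exact le_trans (by linarith) (le_abs_self _)
  linarith

theorem lemmaA (l : ℕ → List ℝ) (hl : ∀ N, ∀ a ∈ l N, 0 ≤ a)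
    (hs : ∀ N, (l N).Pairwise (· ≥ ·)) {K ρ : ℝ} (hK : 0 ≤ K) (h0 : 0 ≤ ρ) (h1 : ρ < 1)
    (hb : ∀ N m, |(pp (l N)).coeff m| ≤ K ^ m * ρ ^ (m * (m - 1))) {c : ℕ → ℝ}
    (hc : ∀ m, Tendsto (fun N => (pp (l N)).coeff m) atTop (𝓝 (c m))) :
    ∃ (u : ℕ → ℝ) (φ : ℕ → ℕ) (E : ℝ), StrictMono φ ∧
      (∀ k, Tendsto (fun N => (l (φ N)).getD k 0) atTop (𝓝 (u k))) ∧ (∀ k, 0 ≤ u k) ∧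
      ∑' k, u k = - c 1 ∧ ∑' k, u k ^ 2 = c 1 ^ 2 - 2 * c 2 ∧
      (∀ x j k, j ≠ k → |Ser c x| ≤ |1 - u j * x| * |1 - u k * x| * Real.exp (E * |x|)) ∧
      (∀ x, Ser c x = 0 → ∃ k, u k * x = 1) := by
  have hBd : ∀ N k, (l N).getD k 0 ≤ K * ρ ^ k := fun N k =>
    getD_bound (l N) (hl N) (hs N) hK h0 (hb N) k
  have hv0 : ∀ N k, 0 ≤ (l N).getD k 0 := fun N k => getD_nonneg _ (hl N) k
  have hBs : Summable (fun k => K * ρ ^ k) := (summable_geometric_of_lt_one h0 h1).mul_left K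
  obtain ⟨u, hu, φ, hφ, hlim⟩ := IsCompact.tendsto_subseq
    (s := Set.univ.pi (fun k => Set.Icc 0 (K * ρ ^ k))) (x := fun N k => (l N).getD k 0)
    (isCompact_univ_pi fun k => isCompact_Icc) (fun N k _ => ⟨hv0 N k, hBd N k⟩)
  rw [tendsto_pi_nhds] at hlim
  have hlim' : ∀ k, Tendsto (fun N => (l (φ N)).getD k 0) atTop (𝓝 (u k)) := hlim
  have hc' : ∀ m, Tendsto (fun N => (pp (l (φ N))).coeff m) atTop (𝓝 (c m)) := fun m =>
    (hc m).comp hφ.tendsto_atTop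
  have hser : ∀ x, Tendsto (fun N => (pp (l (φ N))).eval x) atTop (𝓝 (Ser c x)) := by
    intro x
    simp_rw [eval_eq_ser]
    exact ser_tendsto (ent_bound hK h0 h1) (fun N m => (hb _ m).trans (le_abs_self _)) hc' x
  refine ⟨u, φ, ∑' k, K * ρ ^ k, hφ, hlim', fun k => (hu k trivial).1, ?_, ?_, ?_, ?_⟩
  · have t1 : Tendsto (fun N => ∑' k, (l (φ N)).getD k 0) atTop (𝓝 (∑' k, u k)) :=
      tendsto_tsum_of_dominated_convergence hBs hlim' (Eventually.of_forall fun N k => by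
        rw [Real.norm_eq_abs, abs_of_nonneg (hv0 _ k)]; exact hBd _ k)
    have t2 := (hc' 1).neg
    refine tendsto_nhds_unique t1 (t2.congr fun N => ?_)
    rw [pp_coeff_one, neg_neg]
    have := getD_tsum (l (φ N)) id rfl
    simpa using this.symm
  · have hBs2 : Summable (fun k => (K * ρ ^ k) ^ 2) := by
      have : (fun k => (K * ρ ^ k) ^ 2) = fun k => K ^ 2 * (ρ ^ 2) ^ k := by
        ext k; rw [mul_pow]; ring
      rw [this]
      exact (summable_geometric_of_lt_one (by positivity) (by nlinarith)).mul_left _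
    have t1 : Tendsto (fun N => ∑' k, (l (φ N)).getD k 0 ^ 2) atTop (𝓝 (∑' k, u k ^ 2)) :=
      tendsto_tsum_of_dominated_convergence hBs2 (fun k => (hlim' k).pow 2)
       (Eventually.of_forall fun N k => by
        rw [Real.norm_eq_abs, abs_of_nonneg (by positivity)]
        exact pow_le_pow_left₀ (hv0 _ k) (hBd _ k) 2)
    have t2 := ((hc' 1).pow 2).sub ((hc' 2).const_mul 2)
    refine tendsto_nhds_unique t1 (t2.congr fun N => ?_)
    rw [← pp_sq]
    exact (getD_tsum (l (φ N)) (fun a => a ^ 2) (by simp)).symm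
  · intro x j k hjk
    refine le_of_tendsto_of_tendsto (hser x).abs
      (((((hlim' j).mul_const x).const_sub 1).abs.mul
        (((hlim' k).mul_const x).const_sub 1).abs).mul_const _)
      (Eventually.of_forall fun N => pp_upper _ (hl _) hBs (hBd _) x hjk)
  · intro x hx
    have htail : Tendsto (fun M => (∑' k, K * ρ ^ (k + M)) * |x|) atTop (𝓝 (0 * |x|)) :=
      (tendsto_sum_nat_add (fun k => K * ρ ^ k)).mul_const _
    rw [zero_mul] at htail
    obtain ⟨M, hM⟩ := (htail.eventually (gt_mem_nhds (by norm_num : (0 : ℝ) < 1 / 2))).exists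
    have hle : (∏ k ∈ Finset.range M, |1 - u k * x|) * (1 / 2) ≤ |Ser c x| := by
      refine le_of_tendsto_of_tendsto (Tendsto.mul_const _ (tendsto_finsetProd _ fun k _ =>
        (((hlim' k).mul_const x).const_sub 1).abs)) (hser x).abs
        (Eventually.of_forall fun N => pp_lower _ (hl _) hBs (hBd _) x hM.le)
    rw [hx, abs_zero] at hle
    have hz : ∏ k ∈ Finset.range M, |1 - u k * x| = 0 :=
      le_antisymm (by linarith) (Finset.prod_nonneg fun _ _ => abs_nonneg _)
    obtain ⟨k, _, hk⟩ := Finset.prod_eq_zero_iff.1 hz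
    exact ⟨k, by linarith [abs_eq_zero.1 hk]⟩

theorem lemmaE {c u ξ : ℕ → ℝ} {E : ℝ}
    (hup : ∀ x j k, j ≠ k → |Ser c x| ≤ |1 - u j * x| * |1 - u k * x| * Real.exp (E * |x|))
    (hz : ∀ x, Ser c x = 0 → ∃ k, u k * x = 1) (hu0 : ∀ k, 0 ≤ u k)
    (hinj : ∀ j k, j ≠ k → u j = u k → u j = 0)
    (hmono : StrictMono ξ) (hpos : ∀ n, 0 < ξ n) (hzero : ∀ n, Ser c (ξ n ^ 2) = 0)
    (hall : ∀ x, 0 < x → Ser c (x ^ 2) = 0 → ∃ n, x = ξ n) :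
    ∑' n, (ξ n ^ 2)⁻¹ = ∑' k, u k ∧ ∑' n, (ξ n ^ 4)⁻¹ = ∑' k, u k ^ 2 := by
  choose e he using fun n => hz _ (hzero n)
  have hue : ∀ n, u (e n) = (ξ n ^ 2)⁻¹ := fun n => eq_inv_of_mul_eq_one_left (he n)
  have hei : Function.Injective e := by
    intro a b hab
    have h1 : (ξ a ^ 2)⁻¹ = (ξ b ^ 2)⁻¹ := by rw [← hue, ← hue, hab]
    have h2 := inv_inj.1 h1
    have h3 := (pow_left_inj₀ (hpos a).le (hpos b).le (by norm_num)).1 h2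
    exact hmono.injective h3
  have hr : ∀ k, u k ≠ 0 → k ∈ Set.range e := by
    intro k hk
    have hkp : 0 < u k := lt_of_le_of_ne (hu0 k) (Ne.symm hk)
    have hS : Ser c ((u k)⁻¹) = 0 := by
      have := hup (u k)⁻¹ k (k + 1) (by omega)
      rw [mul_inv_cancel₀ hk] at this
      simpa using this
    have hx : 0 < Real.sqrt (u k)⁻¹ := Real.sqrt_pos.2 (inv_pos.2 hkp)
    have hsq : Real.sqrt (u k)⁻¹ ^ 2 = (u k)⁻¹ := Real.sq_sqrt (inv_pos.2 hkp).le
    obtain ⟨n, hn⟩ := hall _ hx (by rw [hsq]; exact hS)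
    refine ⟨n, ?_⟩
    by_contra hne
    have h1 : u (e n) = u k := by rw [hue, ← hn, hsq, inv_inv]
    exact hk (h1 ▸ hinj _ _ hne h1)
  constructor
  · rw [← hei.tsum_eq (f := u) (fun k hk => hr k hk)]
    exact tsum_congr fun n => (hue n).symm
  · rw [← hei.tsum_eq (f := fun k => u k ^ 2) (fun k hk => hr k (by
      intro h; simp [h] at hk))]
    refine tsum_congr fun n => ?_
    rw [hue, inv_pow, ← pow_mul]

def PosRoots (P : ℝ[X]) : Prop := ∀ w : ℂ, aeval w P = 0 → ∃ r : ℝ, 0 < r ∧ w = r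

theorem exists_list_aux (n : ℕ) : ∀ P : ℝ[X], P.natDegree ≤ n → P.coeff 0 = 1 → PosRoots P →
    ∃ l : List ℝ, (∀ a ∈ l, 0 ≤ a) ∧ P = pp l := by
  induction n with
  | zero =>
    intro P hn h0 _
    refine ⟨[], by simp, ?_⟩
    rw [Polynomial.eq_C_of_natDegree_le_zero hn, h0, pp_nil, C_1]
  | succ n ih =>
    intro P hn h0 hr
    rcases Nat.eq_zero_or_pos P.natDegree with hd | hd
    · exact ⟨[], by simp, by rw [Polynomial.eq_C_of_natDegree_le_zero hd.le, h0, pp_nil, C_1]⟩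
    have hP0 : P ≠ 0 := by rintro rfl; simp at h0
    obtain ⟨w, hw⟩ := IsAlgClosed.exists_aeval_eq_zero ℂ P
      (by rw [degree_eq_natDegree hP0]; exact_mod_cast hd.ne')
    obtain ⟨r, hrpos, rfl⟩ := hr w hw
    have hroot : P.IsRoot r := by
      have := Polynomial.aeval_algebraMap_apply ℂ r P
      rw [show (algebraMap ℝ ℂ) r = (r : ℂ) from rfl, hw] at this
      have h2 : P.eval r = 0 := by
        rw [Polynomial.coe_aeval_eq_eval] at this
        exact (algebraMap ℝ ℂ).injective (by rw [← this, map_zero])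
      exact h2
    obtain ⟨Q, hQ⟩ := dvd_iff_isRoot.2 hroot
    have hPQ : P = (1 - C r⁻¹ * X) * (C (-r) * Q) := by
      rw [hQ, ← mul_assoc]
      congr 1
      have : C r⁻¹ * C r = (1 : ℝ[X]) := by rw [← C_mul, inv_mul_cancel₀ hrpos.ne', C_1]
      rw [C_neg]
      linear_combination (-X) * this
    have hQ0 : Q ≠ 0 := by rintro rfl; simp at hQ; exact hP0 hQ
    have hdeg : (C (-r) * Q).natDegree ≤ n := by
      rw [natDegree_C_mul (by linarith : -r ≠ 0)]
      have : P.natDegree = 1 + Q.natDegree := by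
        rw [hQ, natDegree_mul (X_sub_C_ne_zero r) hQ0, natDegree_X_sub_C]
      omega
    obtain ⟨l, hl, hl2⟩ := ih (C (-r) * Q) hdeg (by
      have := h0
      rw [hPQ, mul_coeff_zero] at this
      simpa using this) (fun w hw => hr w (by rw [hPQ, map_mul, hw, mul_zero]))
    refine ⟨r⁻¹ :: l, ?_, by rw [pp_cons, ← hl2]; exact hPQ⟩
    intro a ha
    rcases List.mem_cons.1 ha with rfl | ha
    · exact (inv_pos.2 hrpos).le
    · exact hl a ha

theorem exists_list (P : ℝ[X]) (h0 : P.coeff 0 = 1) (hr : PosRoots P) :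
    ∃ l : List ℝ, (∀ a ∈ l, 0 ≤ a) ∧ l.Pairwise (· ≥ ·) ∧ P = pp l := by
  obtain ⟨l, hl, hP⟩ := exists_list_aux _ P le_rfl h0 hr
  have hperm := List.perm_insertionSort (· ≥ ·) l
  refine ⟨l.insertionSort (· ≥ ·), fun a ha => hl a (hperm.mem_iff.1 ha),
    List.pairwise_insertionSort _ l, ?_⟩
  rw [hP, pp, pp]
  exact ((hperm.map _).prod_eq).symm

theorem lemmaC (P : ℝ[X]) (hP0 : P.coeff 0 = 1) (hr : PosRoots P) (n : ℕ) (hn : 0 < n) :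
    PosRoots (C 2 * X * derivative P + C (n : ℝ) * P) := by
  intro w hw
  obtain ⟨z, hz⟩ := IsAlgClosed.exists_pow_nat_eq w (n := 2) (by norm_num)
  set p : ℂ[X] := P.map (algebraMap ℝ ℂ) with hp
  have hpP : ∀ w : ℂ, p.eval w = aeval w P := fun w => by
    rw [hp, eval_map, aeval_def]
  have hPne : P ≠ 0 := by rintro rfl; simp at hP0
  have hp0 : p.eval 0 = 1 := by
    rw [← coeff_zero_eq_eval_zero, hp, coeff_map, hP0]; simp
  have hpne : p.comp (X ^ 2) ≠ 0 := by
    intro h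
    have := congrArg (eval 0) h
    simp [eval_comp, hp0] at this
  set R : ℂ[X] := X ^ n * p.comp (X ^ 2) with hR
  have hRne : R ≠ 0 := mul_ne_zero (pow_ne_zero _ X_ne_zero) hpne
  have hdeg : 0 < R.degree := by
    rw [← natDegree_pos_iff_degree_pos, hR, natDegree_mul (pow_ne_zero _ X_ne_zero) hpne,
      natDegree_X_pow]
    omega
  have hdR : (derivative R).eval z = 0 := by
    obtain ⟨k, rfl⟩ : ∃ k, n = k + 1 := ⟨n - 1, by omega⟩
    have h2 : (derivative p).eval w = aeval w (derivative P) := by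
      rw [hp, derivative_map, eval_map, aeval_def]
    have h3 : (2 : ℂ) * w * (derivative p).eval w + ((k : ℂ) + 1) * p.eval w = 0 := by
      rw [h2, hpP]
      simpa using hw
    rw [hR, derivative_mul, derivative_X_pow, derivative_comp, derivative_X_pow]
    simp only [eval_add, eval_mul, eval_pow, eval_X, eval_C, eval_comp, hz, eval_natCast]
    simp only [Nat.add_sub_cancel]
    push_cast
    have : z ^ k * ((2 : ℂ) * w * (derivative p).eval w + ((k : ℂ) + 1) * p.eval w) = 0 := by
      rw [h3, mul_zero]
    rw [← hz] at this ⊢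
    linear_combination this
  have hdRne : derivative R ≠ 0 := by
    intro h
    have := derivative_eq_zero.1 h
    rw [← natDegree_pos_iff_degree_pos] at hdeg
    omega
  have hmem : z ∈ (derivative R).rootSet ℂ := by
    rw [mem_rootSet]
    exact ⟨hdRne, by simpa using hdR⟩
  have hconv := rootSet_derivative_subset_convexHull_rootSet hdeg hmem
  have hsub : R.rootSet ℂ ⊆ {z : ℂ | z.im = 0} := by
    intro y hy
    rw [mem_rootSet] at hy
    have h1 : R.eval y = 0 := by simpa using hy.2
    rw [hR] at h1
    simp only [eval_mul, eval_pow, eval_X, eval_comp, mul_eq_zero] at h1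
    rcases h1 with h1 | h1
    · have := pow_eq_zero_iff (by omega) |>.1 h1
      simp [this]
    · rw [hpP] at h1
      obtain ⟨r, hrp, hr2⟩ := hr _ h1
      have hre := congrArg Complex.re hr2
      have him := congrArg Complex.im hr2
      simp [sq] at hre him
      have : y.re * y.im = 0 := by linarith
      rcases mul_eq_zero.1 this with h | h
      · rw [h] at hre; nlinarith [mul_self_nonneg y.im]
      · exact h
  have hconvset : Convex ℝ {z : ℂ | z.im = 0} := by
    have := (convex_singleton (𝕜 := ℝ) (0 : ℝ)).linear_preimage Complex.imLm
    exact this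
  have hzim : z.im = 0 := convexHull_min hsub hconvset hconv
  have hzre : z = (z.re : ℂ) := by apply Complex.ext <;> simp [hzim]
  refine ⟨z.re ^ 2, ?_, ?_⟩
  · have : z.re ≠ 0 := by
      intro h
      have hz0 : z = 0 := by rw [hzre, h]; simp
      have hw0 : w = 0 := by rw [← hz, hz0]; simp
      rw [hw0] at hw
      have h4 : aeval (0 : ℂ) P = 1 := by rw [← hpP, hp0]
      simp [h4] at hw
      omega
    positivity
  · rw [← hz, Complex.ofReal_pow, ← hzre]

noncomputable def LL (P : ℝ[X]) (w : ℝ) : ℝ :=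
  P.eval w * (derivative P).eval w + w * P.eval w * (derivative (derivative P)).eval w
    - w * (derivative P).eval w ^ 2

theorem LL_pp (l : List ℝ) (A w : ℝ) (hw : 0 ≤ w) (hl : ∀ a ∈ l, 0 ≤ a ∧ a ≤ A) :
    (1 + A * w) ^ 2 * LL (pp l) w ≤ - (pp l).eval w ^ 2 * l.sum := by
  induction l with
  | nil => simp [pp_nil, LL]
  | cons a l ih =>
    have ih := ih (fun b hb => hl b (by simp [hb]))
    obtain ⟨ha, haA⟩ := hl a (by simp)
    have h1 : LL (pp (a :: l)) w = (1 - a * w) ^ 2 * LL (pp l) w - a * (pp l).eval w ^ 2 := by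
      rw [pp_cons]
      simp only [LL, derivative_mul, derivative_sub, derivative_one, derivative_C, derivative_X,
        eval_mul, eval_add, eval_sub, eval_one, eval_C, eval_X, derivative_add, eval_zero,
        zero_mul, zero_add, mul_one, zero_sub, derivative_neg, eval_neg, derivative_zero]
      ring
    have h2 : (pp (a :: l)).eval w = (1 - a * w) * (pp l).eval w := by
      rw [pp_cons]; simp
    rw [h1, h2, List.sum_cons]
    have h3 : (1 - a * w) ^ 2 ≤ (1 + A * w) ^ 2 := by
      apply sq_le_sq'
      · nlinarith [mul_nonneg ha hw, mul_le_mul_of_nonneg_right haA hw]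
      · nlinarith [mul_nonneg ha hw, mul_le_mul_of_nonneg_right haA hw]
    have h4 := mul_le_mul_of_nonneg_left ih (sq_nonneg (1 - a * w))
    have h5 := mul_le_mul_of_nonneg_left h3 (mul_nonneg ha (sq_nonneg ((pp l).eval w)))
    nlinarith

theorem LL_lim (l : ℕ → List ℝ) (hl : ∀ N, ∀ a ∈ l N, 0 ≤ a)
    {K ρ : ℝ} (hK : 0 ≤ K) (h0 : 0 ≤ ρ) (h1 : ρ < 1)
    (hb : ∀ N m, |(pp (l N)).coeff m| ≤ K ^ m * ρ ^ (m * (m - 1))) {c : ℕ → ℝ}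
    (hc : ∀ m, Tendsto (fun N => (pp (l N)).coeff m) atTop (𝓝 (c m))) {w : ℝ} (hw : 0 ≤ w) :
    (1 + K * w) ^ 2 * (Ser c w * Ser (dco c) w + w * Ser c w * Ser (dco (dco c)) w
      - w * Ser (dco c) w ^ 2) ≤ - Ser c w ^ 2 * (- c 1) := by
  have hE := ent_bound hK h0 h1
  have hb0 : ∀ N m, |(pp (l N)).coeff m| ≤ |K ^ m * ρ ^ (m * (m - 1))| := fun N m =>
    (hb N m).trans (le_abs_self _)
  have hdb : ∀ {a d : ℕ → ℝ}, (∀ m, |a m| ≤ |d m|) → ∀ m, |dco a m| ≤ |dco d m| := by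
    intro a d h m
    simp only [dco, abs_mul]
    exact mul_le_mul_of_nonneg_left (h _) (abs_nonneg _)
  have hdc : ∀ {a : ℕ → ℕ → ℝ} {d : ℕ → ℝ}, (∀ m, Tendsto (fun N => a N m) atTop (𝓝 (d m))) →
      ∀ m, Tendsto (fun N => dco (a N) m) atTop (𝓝 (dco d m)) := fun h m => (h _).const_mul _
  have t0 := ser_tendsto hE hb0 hc w
  have t1 := ser_tendsto hE.dco (fun N => hdb (hb0 N)) (hdc hc) w
  have t2 := ser_tendsto hE.dco.dco (fun N => hdb (hdb (hb0 N))) (hdc (hdc hc)) w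
  have hsum : Tendsto (fun N => (l N).sum) atTop (𝓝 (- c 1)) :=
    (hc 1).neg.congr fun N => by rw [pp_coeff_one, neg_neg]
  refine le_of_tendsto_of_tendsto
    ((((t0.mul t1).add ((t0.const_mul w).mul t2)).sub ((t1.pow 2).const_mul w)).const_mul _)
    ((t0.pow 2).neg.mul hsum) (Eventually.of_forall fun N => ?_)
  have := LL_pp (l N) K w hw (fun a ha => ⟨hl N a ha, ?_⟩)
  · simp only [LL, eval_eq_ser, coeff_deriv] at this
    exact this
  · have h2 := List.single_le_sum (hl N) a ha
    have h3 := hb N 1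
    rw [pp_coeff_one, abs_neg] at h3
    have := le_abs_self (l N).sum
    simp at h3
    linarith

def Out (c : ℕ → ℝ) : Prop := ∃ (u : ℕ → ℝ) (E : ℝ), (∀ k, 0 ≤ u k) ∧
      ∑' k, u k = - c 1 ∧ ∑' k, u k ^ 2 = c 1 ^ 2 - 2 * c 2 ∧
      (∀ x j k, j ≠ k → |Ser c x| ≤ |1 - u j * x| * |1 - u k * x| * Real.exp (E * |x|)) ∧
      (∀ x, Ser c x = 0 → ∃ k, u k * x = 1) ∧
      (∀ j k, j ≠ k → u j = u k → u j = 0)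

theorem alt_inc (d : ℕ → ℝ) (h0 : 0 ≤ d 0) (k : ℕ) (h : ∀ j < k, d j ≤ d (j + 1)) :
    0 ≤ (-1) ^ k * ∑ j ∈ Finset.range (k + 1), (-1) ^ j * d j ∧
    (-1) ^ k * ∑ j ∈ Finset.range (k + 1), (-1) ^ j * d j ≤ d k := by
  induction k with
  | zero => simpa using h0
  | succ k ih =>
    obtain ⟨h1, h2⟩ := ih (fun j hj => h j (by omega))
    have h3 := h k (by omega)
    rw [Finset.sum_range_succ]
    have e : (-1 : ℝ) ^ (k + 1) * (∑ j ∈ Finset.range (k + 1), (-1) ^ j * d j +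
        (-1) ^ (k + 1) * d (k + 1)) =
        d (k + 1) - (-1) ^ k * ∑ j ∈ Finset.range (k + 1), (-1) ^ j * d j := by
      have : (-1 : ℝ) ^ (k + 1) * (-1) ^ (k + 1) = 1 := by rw [← mul_pow]; simp
      rw [mul_add, ← mul_assoc, this, pow_succ]; ring
    rw [e]
    constructor <;> linarith

theorem alt_dec (n : ℕ) : ∀ (d : ℕ → ℝ), (∀ j, 0 ≤ d j) → (∀ j, d (j + 1) ≤ d j) →
    0 ≤ ∑ j ∈ Finset.range n, (-1) ^ j * d j ∧ ∑ j ∈ Finset.range n, (-1) ^ j * d j ≤ d 0 := by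
  induction n with
  | zero => intro d h _; simpa using h 0
  | succ n ih =>
    intro d h h2
    obtain ⟨h3, h4⟩ := ih (fun j => d (j + 1)) (fun j => h _) (fun j => h2 _)
    rw [Finset.sum_range_succ']
    have e : ∑ j ∈ Finset.range n, (-1 : ℝ) ^ (j + 1) * d (j + 1) =
      - ∑ j ∈ Finset.range n, (-1 : ℝ) ^ j * d (j + 1) := by
      rw [← Finset.sum_neg_distrib]; refine Finset.sum_congr rfl fun j _ => ?_; ring
    rw [e]
    have := h2 0
    simp only [zero_add] at h4 this
    constructor <;> simp <;> linarith

section hutch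
variable {τ b : ℕ → ℝ}

noncomputable def xpt (τ : ℕ → ℝ) : ℕ → ℝ
  | 0 => 1 / (2 * τ 0)
  | k + 1 => 2 / τ k

theorem tau_anti (hτ : ∀ m, 0 < τ m) (hτ4 : ∀ m, τ (m + 1) < τ m / 4) {i j : ℕ} (h : i ≤ j) :
    τ j ≤ τ i :=
  antitone_nat_of_succ_le (fun m => by linarith [hτ m, hτ4 m]) h

theorem xpt_pos (hτ : ∀ m, 0 < τ m) (k : ℕ) : 0 < xpt τ k := by
  rcases k with _ | k
  · have := hτ 0; simp only [xpt]; positivity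
  · have := hτ k; simp only [xpt]; positivity

theorem xpt_mono (hτ : ∀ m, 0 < τ m) (hτ4 : ∀ m, τ (m + 1) < τ m / 4) : StrictMono (xpt τ) := by
  apply strictMono_nat_of_lt_succ
  intro k
  rcases k with _ | k
  · have := hτ 0
    simp only [xpt]
    rw [div_lt_div_iff₀ (by positivity) this]; linarith
  · have h1 := hτ k
    have h2 := hτ (k + 1)
    have h3 := hτ4 k
    simp only [xpt]
    rw [div_lt_div_iff₀ h1 h2]; linarith

theorem sign_aux (hτ : ∀ m, 0 < τ m) (hτ4 : ∀ m, τ (m + 1) < τ m / 4) (hb0 : b 0 = 1)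
    (hb : ∀ m, b (m + 1) = τ m * b m) (k : ℕ) :
    ∃ δ > 0, ∀ N, k ≤ N →
      δ ≤ (-1) ^ k * ∑ j ∈ Finset.range (N + 1), (-1) ^ j * (b j * xpt τ k ^ j) := by
  have hbpos : ∀ m, 0 < b m := by
    intro m; induction m with
    | zero => rw [hb0]; norm_num
    | succ m ih => rw [hb]; exact mul_pos (hτ m) ih
  set x := xpt τ k with hx
  have hxp : 0 < x := xpt_pos hτ k
  set d : ℕ → ℝ := fun j => b j * x ^ j with hd
  have hdp : ∀ j, 0 < d j := fun j => mul_pos (hbpos j) (pow_pos hxp j)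
  have hds : ∀ j, d (j + 1) = (τ j * x) * d j := fun j => by
    simp only [hd, hb, pow_succ]; ring
  -- right part
  have hright : ∀ j, k ≤ j → τ j * x ≤ 1 / 2 := by
    intro j hj
    have h1 : τ j ≤ τ k := tau_anti hτ hτ4 hj
    have h2 : τ k * x ≤ 1 / 2 := by
      rcases k with _ | k
      · have := hτ 0
        rw [hx, xpt]
        apply le_of_eq; field_simp
      · have h3 := hτ4 k
        have h4 := hτ k
        rw [hx, xpt, mul_div_assoc', div_le_iff₀ h4]; linarith
    nlinarith
  have hR : ∀ n, 0 ≤ ∑ j ∈ Finset.range n, (-1) ^ j * d (k + 1 + j) ∧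
      ∑ j ∈ Finset.range n, (-1) ^ j * d (k + 1 + j) ≤ d (k + 1) := by
    intro n
    refine alt_dec n (fun j => d (k + 1 + j)) (fun j => (hdp _).le) (fun j => ?_)
    have := hds (k + 1 + j)
    rw [← add_assoc, this]
    nlinarith [hright (k + 1 + j) (by omega), hdp (k + 1 + j)]
  have hsplit : ∀ N, k ≤ N → (-1) ^ k * ∑ j ∈ Finset.range (N + 1), (-1) ^ j * d j =
      (-1) ^ k * ∑ j ∈ Finset.range k, (-1) ^ j * d j + d k
        - ∑ j ∈ Finset.range (N - k), (-1) ^ j * d (k + 1 + j) := by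
    intro N hN
    have h1 : N + 1 = (k + 1) + (N - k) := by omega
    have h2 : (-1 : ℝ) ^ k * (-1) ^ k = 1 := by rw [← mul_pow]; simp
    rw [h1, Finset.sum_range_add, Finset.sum_range_succ]
    have e : ∑ j ∈ Finset.range (N - k), (-1 : ℝ) ^ (k + 1 + j) * d (k + 1 + j) =
        - ((-1) ^ k * ∑ j ∈ Finset.range (N - k), (-1 : ℝ) ^ j * d (k + 1 + j)) := by
      rw [Finset.mul_sum, ← Finset.sum_neg_distrib]
      refine Finset.sum_congr rfl fun j _ => ?_
      rw [pow_add, pow_succ]; ring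
    rw [e]
    set A := ∑ j ∈ Finset.range (N - k), (-1 : ℝ) ^ j * d (k + 1 + j)
    linear_combination (d k - A) * h2
  have hdk1 : d (k + 1) ≤ 1 / 2 * d k := by
    rw [hds]; exact mul_le_mul_of_nonneg_right (hright k le_rfl) (hdp k).le
  rcases k with _ | k
  · refine ⟨d 0 - d 1, ?_, fun N hN => ?_⟩
    · linarith [hdp 0]
    · rw [hsplit N hN]
      have := (hR (N - 0)).2
      simp at this ⊢
      linarith
  · have h3 := hτ4 k
    have h4 := hτ k
    have hx' : x = 2 / τ k := by rw [hx, xpt]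
    have hstrict : τ (k + 1) * x < 1 / 2 := by
      rw [hx', mul_div_assoc', div_lt_iff₀ h4]; linarith
    have hk : d (k + 1) = 2 * d k := by
      rw [hds, hx']; field_simp
    have hk2 : d (k + 2) < 1 / 2 * d (k + 1) := by
      rw [hds (k + 1)]; exact mul_lt_mul_of_pos_right hstrict (hdp _)
    refine ⟨d (k + 1) - d (k + 2) - d k, by linarith, fun N hN => ?_⟩
    rw [hsplit N hN]
    have hR' := (hR (N - (k + 1))).2
    have hL := (alt_inc d (hdp 0).le k (fun j hj => by
      rw [hds]
      have h5 : τ k ≤ τ j := tau_anti hτ hτ4 hj.le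
      have h6 : (1 : ℝ) ≤ τ j * x := by
        rw [hx', mul_div_assoc', le_div_iff₀ h4]; linarith
      nlinarith [hdp j])).2
    have e : (-1 : ℝ) ^ (k + 1) * ∑ j ∈ Finset.range (k + 1), (-1) ^ j * d j =
      - ((-1) ^ k * ∑ j ∈ Finset.range (k + 1), (-1) ^ j * d j) := by rw [pow_succ]; ring
    rw [e]
    linarith

theorem pp_natDegree (l : List ℝ) : (pp l).natDegree ≤ l.length := by
  induction l with
  | nil => simp [pp_nil]
  | cons a l ih =>
    rw [pp_cons, List.length_cons, add_comm]
    refine natDegree_mul_le.trans (Nat.add_le_add ?_ ih)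
    refine (natDegree_sub_le _ _).trans ?_
    simp only [natDegree_one, zero_le, sup_of_le_right]
    exact (natDegree_C_mul_le a X).trans natDegree_X_le

theorem hutchinson (hτ : ∀ m, 0 < τ m) (hτ4 : ∀ m, τ (m + 1) < τ m / 4) (hb0 : b 0 = 1)
    (hb : ∀ m, b (m + 1) = τ m * b m) {K ρ : ℝ} (hK : 0 ≤ K) (h0 : 0 ≤ ρ) (h1 : ρ < 1)
    (hbd : ∀ m, b m ≤ K ^ m * ρ ^ (m * (m - 1))) : Out (fun m => (-1) ^ m * b m) := by
  have hbpos : ∀ m, 0 < b m := by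
    intro m; induction m with
    | zero => rw [hb0]; norm_num
    | succ m ih => rw [hb]; exact mul_pos (hτ m) ih
  set c : ℕ → ℝ := fun m => (-1) ^ m * b m with hcdef
  have habs : ∀ m, |c m| = b m := fun m => by
    simp [hcdef, abs_mul, abs_of_pos (hbpos m)]
  set x := xpt τ with hx
  have hxp := xpt_pos hτ
  have hxm : StrictMono x := xpt_mono hτ hτ4
  choose δ hδ hsign using sign_aux hτ hτ4 hb0 hb
  let P : ℕ → ℝ[X] := fun N => ∑ m ∈ Finset.range (N + 1), monomial m (c m)
  have hPev : ∀ N y, (P N).eval y = ∑ m ∈ Finset.range (N + 1), (-1) ^ m * (b m * y ^ m) := by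
    intro N y
    simp only [P, eval_finsetSum, eval_monomial, hcdef, mul_assoc]
  have hPco : ∀ N m, (P N).coeff m = if m < N + 1 then c m else 0 := by
    intro N m
    simp only [P, finsetSum_coeff, coeff_monomial]
    simp
  have hPdeg : ∀ N, (P N).natDegree ≤ N := by
    intro N
    refine natDegree_sum_le_of_forall_le _ _ (fun m hm => ?_)
    exact (natDegree_monomial_le _).trans (by simp at hm; omega)
  have hsg : ∀ N k, k ≤ N → δ k ≤ (-1) ^ k * (P N).eval (x k) := by
    intro N k hk; rw [hPev]; exact hsign k N hk
  have hroot : ∀ N k, k < N → ∃ r, (P N).eval r = 0 ∧ x k < r ∧ r < x (k + 1) := by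
    intro N k hk
    have s1 := hsg N k hk.le
    have s2 := hsg N (k + 1) hk
    have d1 := hδ k
    have d2 := hδ (k + 1)
    rw [pow_succ] at s2
    have hcont : ContinuousOn (fun y => (-1) ^ k * (P N).eval y) (Set.Icc (x k) (x (k + 1))) :=
      ((P N).continuous.const_mul _).continuousOn
    obtain ⟨r, hr, hr0⟩ := intermediate_value_Icc' (hxm (Nat.lt_succ_self k)).le hcont
      (show (0 : ℝ) ∈ _ from ⟨by linarith, by linarith⟩)
    have hr0' : (P N).eval r = 0 := by
      have : (-1 : ℝ) ^ k ≠ 0 := by positivity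
      simpa [this] using hr0
    refine ⟨r, hr0', lt_of_le_of_ne hr.1 ?_, lt_of_le_of_ne hr.2 ?_⟩
    · rintro rfl; rw [hr0'] at s1; linarith
    · rintro rfl; rw [hr0'] at s2; linarith
  have hroot' : ∀ N k, ∃ r, k < N → ((P N).eval r = 0 ∧ x k < r ∧ r < x (k + 1)) := by
    intro N k
    by_cases h : k < N
    · obtain ⟨r, hr⟩ := hroot N k h; exact ⟨r, fun _ => hr⟩
    · exact ⟨0, fun h' => absurd h' h⟩
  choose r hr using hroot'
  let l : ℕ → List ℝ := fun N => (List.range N).map (fun k => (r N k)⁻¹)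
  have hlen : ∀ N, (l N).length = N := fun N => by simp [l]
  have hrpos : ∀ N k, k < N → 0 < r N k := fun N k h => (hxp k).trans (hr N k h).2.1
  have hrlt : ∀ N i k, i < k → k < N → r N i < r N k := by
    intro N i k hik hk
    calc r N i < x (i + 1) := (hr N i (hik.trans hk)).2.2
      _ ≤ x k := hxm.monotone hik
      _ < r N k := (hr N k hk).2.1
  have hget : ∀ N k, k < N → (l N).getD k 0 = (r N k)⁻¹ := by
    intro N k hk
    rw [List.getD_eq_getElem _ _ (by rw [hlen]; exact hk)]
    simp [l]
  have hl : ∀ N, ∀ a ∈ l N, 0 ≤ a := by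
    intro N a ha
    simp only [l, List.mem_map, List.mem_range] at ha
    obtain ⟨k, hk, rfl⟩ := ha
    exact (inv_pos.2 (hrpos N k hk)).le
  have hs : ∀ N, (l N).Pairwise (· ≥ ·) := by
    intro N
    rw [List.pairwise_iff_getElem]
    intro i j hi hj hij
    rw [hlen] at hi hj
    have h2 := inv_anti₀ (hrpos N i hi) (hrlt N i j hij hj).le
    simpa [l] using h2
  have hPP : ∀ N, P N = pp (l N) := by
    intro N
    have hinj : Set.InjOn (r N) (Finset.range N : Set ℕ) := by
      intro i hi j hj hij
      simp at hi hj
      rcases lt_trichotomy i j with h | h | h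
      · exact absurd hij (hrlt N i j h hj).ne
      · exact h
      · exact absurd hij (hrlt N j i h hi).ne'
    have h0n : (0 : ℝ) ∉ (Finset.range N).image (r N) := by
      intro h
      simp only [Finset.mem_image, Finset.mem_range] at h
      obtain ⟨k, hk, hk0⟩ := h
      exact (hrpos N k hk).ne' hk0
    have hcard : (insert 0 ((Finset.range N).image (r N))).card = N + 1 := by
      rw [Finset.card_insert_of_notMem h0n, Finset.card_image_of_injOn hinj, Finset.card_range]
    refine eq_of_degree_sub_lt_of_eval_finset_eq (insert 0 ((Finset.range N).image (r N))) ?_ ?_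
    · rw [hcard]
      have h3 : (P N - pp (l N)).natDegree ≤ N := by
        refine (natDegree_sub_le _ _).trans (max_le (hPdeg N) ?_)
        exact (pp_natDegree _).trans (hlen N).le
      refine lt_of_le_of_lt (degree_le_of_natDegree_le h3) ?_
      exact_mod_cast Nat.lt_succ_self N
    · intro y hy
      rcases Finset.mem_insert.1 hy with rfl | hy
      · rw [← coeff_zero_eq_eval_zero, ← coeff_zero_eq_eval_zero, pp_coeff_zero, hPco]
        simp [hcdef, hb0]
      · simp only [Finset.mem_image, Finset.mem_range] at hy
        obtain ⟨k, hk, rfl⟩ := hy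
        rw [(hr N k hk).1, pp_eval _ _ (hlen N).le]
        refine (Finset.prod_eq_zero (Finset.mem_range.2 hk) ?_).symm
        rw [hget N k hk, inv_mul_cancel₀ (hrpos N k hk).ne', sub_self]
  have hbN : ∀ N m, |(pp (l N)).coeff m| ≤ K ^ m * ρ ^ (m * (m - 1)) := by
    intro N m
    rw [← hPP, hPco]
    split_ifs
    · rw [habs]; exact hbd m
    · rw [abs_zero]; positivity
  have hlimc : ∀ m, Tendsto (fun N => (pp (l N)).coeff m) atTop (𝓝 (c m)) := by
    intro m
    refine tendsto_const_nhds.congr' ?_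
    filter_upwards [eventually_ge_atTop m] with N hN
    rw [← hPP, hPco, if_pos (by omega)]
  obtain ⟨u, φ, E, hφ, hlim, hu0, hs1, hs2, hup, hz⟩ := lemmaA l hl hs hK h0 h1 hbN hlimc
  have hser : ∀ y, Tendsto (fun N => (P N).eval y) atTop (𝓝 (Ser c y)) := by
    intro y
    simp_rw [hPP, eval_eq_ser]
    exact ser_tendsto (ent_bound hK h0 h1) (fun N m => (hbN _ m).trans (le_abs_self _)) hlimc y
  have hne : ∀ k, Ser c (x k) ≠ 0 := by
    intro k h
    have : δ k ≤ (-1) ^ k * Ser c (x k) := by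
      refine ge_of_tendsto ((hser (x k)).const_mul _) ?_
      filter_upwards [eventually_ge_atTop k] with N hN using hsg N k hN
    rw [h, mul_zero] at this
    linarith [hδ k]
  have hlo : ∀ k, (x (k + 1))⁻¹ ≤ u k := by
    intro k
    refine ge_of_tendsto (hlim k) ?_
    filter_upwards [eventually_ge_atTop (k + 1)] with N hN
    have hk : k < φ N := lt_of_lt_of_le hN (hφ.id_le N)
    rw [hget _ k hk]
    exact inv_anti₀ (hrpos _ k hk) (hr _ k hk).2.2.le
  have hhi : ∀ k, u k ≤ (x k)⁻¹ := by
    intro k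
    refine le_of_tendsto (hlim k) ?_
    filter_upwards [eventually_ge_atTop (k + 1)] with N hN
    have hk : k < φ N := lt_of_lt_of_le hN (hφ.id_le N)
    rw [hget _ k hk]
    exact inv_anti₀ (hxp k) (hr _ k hk).2.1.le
  have hlt : ∀ j k, j < k → u k < u j := by
    intro j k hjk
    have h2 : (x k)⁻¹ ≤ (x (j + 1))⁻¹ := inv_anti₀ (hxp _) (hxm.monotone hjk)
    refine lt_of_le_of_ne ((hhi k).trans (h2.trans (hlo j))) ?_
    intro he
    have h3 : u j = (x (j + 1))⁻¹ :=
      le_antisymm (by rw [← he]; exact (hhi k).trans h2) (hlo j)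
    have h4 := hup (x (j + 1)) j k hjk.ne
    rw [h3, inv_mul_cancel₀ (hxp _).ne'] at h4
    exact hne (j + 1) (by simpa using h4)
  refine ⟨u, E, hu0, hs1, hs2, hup, hz, fun j k hjk he => ?_⟩
  rcases lt_or_gt_of_ne hjk with h | h
  · exact absurd he (hlt j k h).ne'
  · exact absurd he (hlt k j h).ne

end hutch

theorem ser_thetaR {c : ℕ → ℝ} (hc : Ent c) (n : ℝ) (hn' : n ≠ 0) (w : ℝ) :
    Ser (fun m => (2 * (m : ℝ) + n) / n * c m) w = Ser c w + 2 / n * (w * Ser (dco c) w) := by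
  have hs : Summable (fun m : ℕ => (m : ℝ) * c m * w ^ m) := by
    rw [← summable_nat_add_iff 1]
    refine ((hc.dco.summable w).mul_left w).congr (fun m => ?_)
    simp only [dco]; push_cast; ring
  have h1 : w * Ser (dco c) w = ∑' m : ℕ, (m : ℝ) * c m * w ^ m := by
    rw [hs.tsum_eq_zero_add, Ser, ← tsum_mul_left]
    simp only [Nat.cast_zero, zero_mul, zero_add]
    refine tsum_congr fun m => ?_
    simp only [dco]; push_cast; ring
  rw [h1, ← tsum_mul_left, Ser, Ser, ← (hc.summable w).tsum_add (hs.mul_left _)]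
  refine tsum_congr fun m => ?_
  field_simp
  ring

theorem ser_theta {c : ℕ → ℝ} (hc : Ent c) (n : ℕ) (hn : 0 < n) (w : ℝ) :
    Ser (fun m => (2 * (m : ℝ) + n) / n * c m) w = Ser c w + 2 / n * (w * Ser (dco c) w) :=
  ser_thetaR hc n (by exact_mod_cast hn.ne') w

theorem deriv_zero_of_sq {D : ℝ → ℝ} {x u E D' : ℝ} (hu : u * x = 1)
    (h : ∀ y, |D y| ≤ |1 - u * y| * |1 - u * y| * Real.exp (E * |y|)) (hD : HasDerivAt D D' x) :
    D x = 0 ∧ D' = 0 := by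
  have hx : D x = 0 := by
    have := h x
    rw [hu] at this
    simpa using this
  refine ⟨hx, ?_⟩
  refine hD.unique ?_
  rw [hasDerivAt_iff_isLittleO]
  have hO : D =O[𝓝 x] fun y => (y - x) ^ 2 := by
    have h1 : D =O[𝓝 x] fun y => (y - x) ^ 2 * (u ^ 2 * Real.exp (E * |y|)) := by
      refine Asymptotics.IsBigO.of_bound 1 (Eventually.of_forall fun y => ?_)
      rw [one_mul, Real.norm_eq_abs, Real.norm_eq_abs, abs_of_nonneg (a := _ * _) (by positivity)]
      refine (h y).trans (le_of_eq ?_)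
      rw [← abs_mul, abs_mul_self, ← hu]; ring
    have h2 : (fun y => u ^ 2 * Real.exp (E * |y|)) =O[𝓝 x] fun _ => (1 : ℝ) := by
      have hcont : Continuous (fun y : ℝ => u ^ 2 * Real.exp (E * |y|)) := by fun_prop
      exact (hcont.tendsto x).isBigO_one ℝ
    simpa using h1.trans ((Asymptotics.isBigO_refl (fun y => (y - x) ^ 2) (𝓝 x)).mul h2)
  have ho : (fun y : ℝ => (y - x) ^ 2) =o[𝓝 x] fun y => y - x :=
    by simpa [Real.norm_eq_abs, sq_abs] using Asymptotics.isLittleO_pow_sub_sub x (show 1 < 2 by norm_num)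
  simpa [hx] using hO.trans_isLittleO ho

theorem caseD (P : ℕ → ℝ[X]) (hP0 : ∀ N, (P N).coeff 0 = 1) (hr : ∀ N, PosRoots (P N))
    {K ρ : ℝ} (hK : 0 ≤ K) (h0 : 0 ≤ ρ) (h1 : ρ < 1)
    (hb : ∀ N m, |(P N).coeff m| ≤ K ^ m * ρ ^ (m * (m - 1))) {c : ℕ → ℝ}
    (hc : ∀ m, Tendsto (fun N => (P N).coeff m) atTop (𝓝 (c m))) (hc1 : c 1 < 0)
    (n : ℕ) (hn : 0 < n) (hsim : ∀ w, 0 < w → Ser c w = 0 → Ser (dco c) w ≠ 0) :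
    Out (fun m => (2 * (m : ℝ) + n) / n * c m) := by
  have hn' : (0 : ℝ) < n := by exact_mod_cast hn
  have hn1 : (1 : ℝ) ≤ n := by exact_mod_cast hn
  choose l hl _ hPl using fun N => exists_list (P N) (hP0 N) (hr N)
  let Q : ℕ → ℝ[X] := fun N =>
    C (1 / (n : ℝ)) * (C 2 * X * derivative (P N) + C (n : ℝ) * P N)
  have hQco : ∀ N m, (Q N).coeff m = (2 * (m : ℝ) + n) / n * (P N).coeff m := by
    intro N m
    simp only [Q]
    rw [coeff_C_mul, coeff_add, coeff_C_mul, mul_assoc, coeff_C_mul]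
    rcases m with _ | m
    · simp
      field_simp
    · rw [coeff_X_mul, coeff_derivative]; push_cast; field_simp
  have hQr : ∀ N, PosRoots (Q N) := by
    intro N w hw
    refine lemmaC (P N) (hP0 N) (hr N) n hn w ?_
    simp only [Q] at hw
    rw [map_mul, aeval_C] at hw
    refine (mul_eq_zero.1 hw).resolve_left ?_
    simp [hn.ne']
  have hQ0 : ∀ N, (Q N).coeff 0 = 1 := by
    intro N; rw [hQco, hP0]; simp [hn.ne']
  choose k hk hks hQk using fun N => exists_list (Q N) (hQ0 N) (hQr N)
  have hbQ : ∀ N m, |(pp (k N)).coeff m| ≤ (3 * K) ^ m * ρ ^ (m * (m - 1)) := by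
    intro N m
    rw [← hQk, hQco, abs_mul, mul_pow, mul_assoc]
    apply mul_le_mul _ (hb N m) (abs_nonneg _) (by positivity)
    rw [abs_of_nonneg (by positivity), div_le_iff₀ hn']
    have h3 : (1 : ℝ) + m * 2 ≤ (1 + 2) ^ m := one_add_mul_le_pow (by norm_num) m
    norm_num at h3
    have h4 : (0 : ℝ) ≤ m := Nat.cast_nonneg m
    nlinarith [mul_nonneg h4 (sub_nonneg.2 hn1), mul_le_mul_of_nonneg_right h3 hn'.le]
  have hcQ : ∀ m, Tendsto (fun N => (pp (k N)).coeff m) atTop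
      (𝓝 ((2 * (m : ℝ) + n) / n * c m)) := by
    intro m
    refine ((hc m).const_mul _).congr fun N => ?_
    rw [← hQk, hQco]
  obtain ⟨u, φ, E, hφ, hlim, hu0, hs1, hs2, hup, hz⟩ :=
    lemmaA k hk hks (by positivity : 0 ≤ 3 * K) h0 h1 hbQ hcQ
  refine ⟨u, E, hu0, hs1, hs2, hup, hz, fun i j hij he => ?_⟩
  by_contra hne
  have hup' := fun y => hup y i j hij
  simp_rw [← he] at hup'
  have hbc : ∀ m, |c m| ≤ K ^ m * ρ ^ (m * (m - 1)) := fun m =>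
    le_of_tendsto (hc m).abs (Eventually.of_forall fun N => hb N m)
  have hE : Ent c := (ent_bound hK h0 h1).mono fun m => (hbc m).trans (le_abs_self _)
  set x := (u i)⁻¹ with hx
  have hxp : 0 < x := inv_pos.2 (lt_of_le_of_ne (hu0 i) (Ne.symm hne))
  have hD : HasDerivAt (Ser (fun m => (2 * (m : ℝ) + n) / n * c m))
      (Ser (dco c) x + 2 / n * (1 * Ser (dco c) x + x * Ser (dco (dco c)) x)) x := by
    have := (hE.hasDerivAt x).add (((hasDerivAt_id x).mul (hE.dco.hasDerivAt x)).const_mul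
      (2 / (n : ℝ)))
    refine this.congr_of_eventuallyEq (Eventually.of_forall fun y => ?_)
    rw [ser_theta hE n hn]; rfl
  obtain ⟨e1, e2⟩ := deriv_zero_of_sq (mul_inv_cancel₀ hne) hup' hD
  rw [ser_theta hE n hn] at e1
  have hLL := LL_lim l hl hK h0 h1 (fun N m => by rw [← hPl]; exact hb N m)
    (fun m => by simp_rw [← hPl]; exact hc m) hxp.le
  rw [← hx] at e1
  set A := Ser c x
  set B := Ser (dco c) x
  set F := Ser (dco (dco c)) x
  have hzero : A * B + x * A * F - x * B ^ 2 = 0 := by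
    field_simp at e1 e2
    have : 2 * (A * B + x * A * F - x * B ^ 2) = 0 := by linear_combination A * e2 - B * e1
    linarith
  rw [hzero, mul_zero] at hLL
  have hA : A = 0 := by
    by_contra hA
    have : 0 < A ^ 2 := by positivity
    nlinarith
  have hB : B = 0 := by
    rw [hA, zero_add] at e1
    have h2 : (2 / (n : ℝ)) ≠ 0 := by positivity
    simpa [h2, hxp.ne'] using e1
  exact hsim x hxp hA hB

/-! q-trigonometric polynomials -/

noncomputable def CT (q s : ℝ) : ℕ → ℝ[X] × ℝ[X]
  | 0 => (1, 0)
  | N + 1 =>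
    let c := (CT q s N).1.comp (C (q ^ 2) * X) - C s * (X * (CT q s N).2.comp (C (q ^ 2) * X))
    (c, C q * (CT q s N).2.comp (C (q ^ 2) * X) + c)

theorem posroots_of (P : ℝ[X]) (hP : P.coeff 0 ≠ 0)
    (h : ∀ z : ℂ, 0 < z.im → aeval (z ^ 2) P ≠ 0) : PosRoots P := by
  intro w hw
  obtain ⟨z, hz⟩ := IsAlgClosed.exists_pow_nat_eq w (n := 2) (by norm_num)
  rcases lt_trichotomy z.im 0 with hi | hi | hi
  · exact absurd (by rw [neg_sq, hz]; exact hw) (h (-z) (by simpa using hi))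
  · have hzre : z = (z.re : ℂ) := by apply Complex.ext <;> simp [hi]
    refine ⟨z.re ^ 2, ?_, by rw [← hz, Complex.ofReal_pow, ← hzre]⟩
    have : z.re ≠ 0 := by
      intro h0
      have hw0 : w = 0 := by rw [← hz, hzre, h0]; simp
      rw [hw0, ← coeff_zero_eq_aeval_zero'] at hw
      apply hP
      simpa using hw
    positivity
  · exact absurd (by rw [hz]; exact hw) (h z hi)

theorem CT_im (q s : ℝ) (hq : 0 < q) (hs : 0 < s) (N : ℕ) : ∀ z : ℂ, 0 < z.im →
    0 < (z * aeval (z ^ 2) (CT q s (N + 1)).2 *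
      (starRingEnd ℂ) (aeval (z ^ 2) (CT q s (N + 1)).1)).im := by
  induction N with
  | zero => intro z hz; simpa [CT] using hz
  | succ N ih =>
    intro z hz
    have h := ih (q * z) (by simpa using mul_pos hq hz)
    have hw : ((q : ℂ) ^ 2 * z ^ 2) = (q * z) ^ 2 := by ring
    have e1 : aeval (z ^ 2) (CT q s (N + 2)).1 = aeval ((q * z) ^ 2) (CT q s (N + 1)).1
        - s * (z ^ 2 * aeval ((q * z) ^ 2) (CT q s (N + 1)).2) := by
      rw [CT]
      simp [aeval_comp, hw]
    have e2 : aeval (z ^ 2) (CT q s (N + 2)).2 = q * aeval ((q * z) ^ 2) (CT q s (N + 1)).2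
        + aeval (z ^ 2) (CT q s (N + 2)).1 := by
      rw [CT]
      simp [aeval_comp, hw]
    rw [e2, e1]
    set c := aeval ((q * z) ^ 2) (CT q s (N + 1)).1
    set t := aeval ((q * z) ^ 2) (CT q s (N + 1)).2
    set D := (c - s * (z ^ 2 * t)) with hD
    have key : (z * (q * t + D) * (starRingEnd ℂ) D).im =
        (q * z * t * (starRingEnd ℂ) c).im + z.im * Complex.normSq D
          + q * s * Complex.normSq t * Complex.normSq z * z.im := by
      rw [hD]
      simp only [Complex.normSq_apply, Complex.mul_im, Complex.mul_re, Complex.add_im,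
        Complex.add_re, Complex.sub_im, Complex.sub_re, Complex.conj_im, Complex.conj_re,
        Complex.ofReal_im, Complex.ofReal_re, sq]
      ring
    rw [key]
    have := Complex.normSq_nonneg D
    have := Complex.normSq_nonneg t
    have := Complex.normSq_nonneg z
    positivity

noncomputable def cp (q s : ℝ) : ℕ → ℝ
  | 0 => 1
  | m + 1 => s * q ^ (2 * m) * cp q s m / ((1 - q ^ (2 * m + 1)) * (1 - q ^ (2 * m + 2)))

noncomputable def tp (q s : ℝ) (m : ℕ) : ℝ := cp q s m / (1 - q ^ (2 * m + 1))

section trig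
variable {q s : ℝ}

theorem one_sub_pow_pos (hq0 : 0 < q) (hq1 : q < 1) (m : ℕ) : 0 < 1 - q ^ (m + 1) := by
  have := pow_lt_one₀ hq0.le hq1 (Nat.succ_ne_zero m)
  simpa using this

theorem cp_pos (hq0 : 0 < q) (hq1 : q < 1) (hs : 0 < s) (m : ℕ) : 0 < cp q s m := by
  induction m with
  | zero => simp [cp]
  | succ m ih =>
    rw [cp]
    have h1 := one_sub_pow_pos hq0 hq1 (2 * m)
    have h2 := one_sub_pow_pos hq0 hq1 (2 * m + 1)
    positivity

theorem tp_pos (hq0 : 0 < q) (hq1 : q < 1) (hs : 0 < s) (m : ℕ) : 0 < tp q s m :=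
  div_pos (cp_pos hq0 hq1 hs m) (one_sub_pow_pos hq0 hq1 _)

theorem tp_fix (hq0 : 0 < q) (hq1 : q < 1) (m : ℕ) :
    tp q s m = q ^ (2 * m + 1) * tp q s m + cp q s m := by
  have h1 := one_sub_pow_pos hq0 hq1 (2 * m)
  have : tp q s m * (1 - q ^ (2 * m + 1)) = cp q s m := by
    rw [tp]; field_simp
  linarith

theorem cp_fix (hq0 : 0 < q) (hq1 : q < 1) (m : ℕ) :
    cp q s (m + 1) = q ^ (2 * m + 2) * cp q s (m + 1) + s * q ^ (2 * m) * tp q s m := by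
  have h1 := one_sub_pow_pos hq0 hq1 (2 * m)
  have h2 := one_sub_pow_pos hq0 hq1 (2 * m + 1)
  have : cp q s (m + 1) * (1 - q ^ (2 * m + 2)) = s * q ^ (2 * m) * tp q s m := by
    rw [cp, tp]; field_simp
  linarith

noncomputable def cN (q s : ℝ) (N m : ℕ) : ℝ := (-1) ^ m * (CT q s N).1.coeff m
noncomputable def tN (q s : ℝ) (N m : ℕ) : ℝ := (-1) ^ m * (CT q s N).2.coeff m

theorem cN_succ_zero (N : ℕ) : cN q s (N + 1) 0 = cN q s N 0 := by
  simp only [cN, CT, coeff_sub, coeff_C_mul, comp_C_mul_X_coeff]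
  simp

theorem cN_succ_succ (N m : ℕ) : cN q s (N + 1) (m + 1) =
    q ^ (2 * m + 2) * cN q s N (m + 1) + s * q ^ (2 * m) * tN q s N m := by
  simp only [cN, tN, CT, coeff_sub, coeff_C_mul, comp_C_mul_X_coeff, coeff_X_mul]
  rw [← pow_mul, ← pow_mul]; ring

theorem tN_succ (N m : ℕ) : tN q s (N + 1) m =
    q ^ (2 * m + 1) * tN q s N m + cN q s (N + 1) m := by
  simp only [cN, tN, CT, coeff_sub, coeff_add, coeff_C_mul, comp_C_mul_X_coeff]
  rw [← pow_mul]; ring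

theorem cN_zero (N : ℕ) : cN q s N 0 = 1 := by
  induction N with
  | zero => simp [cN, CT]
  | succ N ih => rw [cN_succ_zero, ih]

theorem CT_bounds (hq0 : 0 < q) (hq1 : q < 1) (hs : 0 < s) (N : ℕ) :
    (∀ m, 0 ≤ cN q s N m ∧ cN q s N m ≤ cp q s m ∧ cN q s N m ≤ cN q s (N + 1) m) ∧
    (∀ m, 0 ≤ tN q s N m ∧ tN q s N m ≤ tp q s m ∧ tN q s N m ≤ tN q s (N + 1) m) := by
  induction N with
  | zero =>
    have hc0 : ∀ m, cN q s 0 (m + 1) = 0 := fun m => by simp [cN, CT, coeff_one]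
    have ht0 : ∀ m, tN q s 0 m = 0 := fun m => by simp [tN, CT]
    have hc1 : ∀ m, cN q s 1 (m + 1) = 0 := fun m => by
      rw [cN_succ_succ, hc0, ht0]; simp
    refine ⟨fun m => ?_, fun m => ?_⟩
    · rcases m with _ | m
      · rw [cN_zero, cN_zero]; simp [cp]
      · rw [hc0, hc1]; exact ⟨le_rfl, (cp_pos hq0 hq1 hs _).le, le_rfl⟩
    · rw [tN_succ, ht0]
      refine ⟨le_rfl, (tp_pos hq0 hq1 hs _).le, ?_⟩
      rcases m with _ | m
      · rw [cN_zero]; simp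
      · rw [hc1]; simp
  | succ N ih =>
    obtain ⟨ihc, iht⟩ := ih
    have hc : ∀ m, 0 ≤ cN q s (N + 1) m ∧ cN q s (N + 1) m ≤ cp q s m ∧
        cN q s (N + 1) m ≤ cN q s (N + 2) m := by
      intro m
      rcases m with _ | m
      · rw [cN_zero, cN_zero]; simp [cp]
      · obtain ⟨a1, a2, a3⟩ := ihc (m + 1)
        obtain ⟨b1, b2, b3⟩ := iht m
        rw [cN_succ_succ (N + 1), cN_succ_succ N, cp_fix hq0 hq1] at *
        refine ⟨by positivity, ?_, ?_⟩
        · gcongr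
          rw [cp_fix hq0 hq1]; exact a2
        · gcongr
    refine ⟨hc, fun m => ?_⟩
    obtain ⟨a1, a2, a3⟩ := hc m
    obtain ⟨b1, b2, b3⟩ := iht m
    rw [tN_succ (N + 1), tN_succ N, tp_fix hq0 hq1]
    rw [tN_succ N] at b3
    refine ⟨by positivity, by gcongr, by gcongr⟩

theorem CT_lim (hq0 : 0 < q) (hq1 : q < 1) (hs : 0 < s) (m : ℕ) :
    Tendsto (fun N => cN q s N m) atTop (𝓝 (cp q s m)) ∧
    Tendsto (fun N => tN q s N m) atTop (𝓝 (tp q s m)) := by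
  have hb := CT_bounds hq0 hq1 hs
  have hcl : ∀ m, ∃ L, Tendsto (fun N => cN q s N m) atTop (𝓝 L) := fun m =>
    ⟨_, tendsto_atTop_ciSup (monotone_nat_of_le_succ fun N => ((hb N).1 m).2.2)
      ⟨cp q s m, by rintro _ ⟨N, rfl⟩; exact ((hb N).1 m).2.1⟩⟩
  have htl : ∀ m, ∃ L, Tendsto (fun N => tN q s N m) atTop (𝓝 L) := fun m =>
    ⟨_, tendsto_atTop_ciSup (monotone_nat_of_le_succ fun N => ((hb N).2 m).2.2)
      ⟨tp q s m, by rintro _ ⟨N, rfl⟩; exact ((hb N).2 m).2.1⟩⟩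
  have hstep : ∀ m, Tendsto (fun N => cN q s N m) atTop (𝓝 (cp q s m)) →
      Tendsto (fun N => tN q s N m) atTop (𝓝 (tp q s m)) := by
    intro m hc
    obtain ⟨L, hL⟩ := htl m
    have h1 : Tendsto (fun N => tN q s (N + 1) m) atTop (𝓝 (q ^ (2 * m + 1) * L + cp q s m)) := by
      simp_rw [tN_succ]
      exact (hL.const_mul _).add (hc.comp (tendsto_add_atTop_nat 1))
    have h2 := tendsto_nhds_unique (hL.comp (tendsto_add_atTop_nat 1)) h1
    have h3 : L = tp q s m := by
      have h4 := one_sub_pow_pos hq0 hq1 (2 * m)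
      rw [tp, eq_div_iff h4.ne']; linarith
    rw [← h3]; exact hL
  have hc : ∀ m, Tendsto (fun N => cN q s N m) atTop (𝓝 (cp q s m)) := by
    intro m
    induction m with
    | zero => simp_rw [cN_zero]; simp [cp]
    | succ m ih =>
      obtain ⟨L, hL⟩ := hcl (m + 1)
      have h1 : Tendsto (fun N => cN q s (N + 1) (m + 1)) atTop
          (𝓝 (q ^ (2 * m + 2) * L + s * q ^ (2 * m) * tp q s m)) := by
        simp_rw [cN_succ_succ]
        exact (hL.const_mul _).add ((hstep m ih).const_mul _)
      have h2 := tendsto_nhds_unique (hL.comp (tendsto_add_atTop_nat 1)) h1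
      have h3 : L = cp q s (m + 1) := by
        have h4 := one_sub_pow_pos hq0 hq1 (2 * m + 1)
        have h5 := cp_fix (s := s) hq0 hq1 m
        have h6 : (L - cp q s (m + 1)) * (1 - q ^ (2 * m + 2)) = 0 := by linarith
        rcases mul_eq_zero.1 h6 with h | h
        · linarith
        · exact absurd h h4.ne'
      rw [← h3]; exact hL
  exact ⟨hc m, hstep m (hc m)⟩

theorem cp_le (hq0 : 0 < q) (hq1 : q < 1) (hs : 0 < s) (m : ℕ) :
    cp q s m ≤ (s / (1 - q) ^ 2) ^ m * q ^ (m * (m - 1)) := by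
  have h1q : 0 < 1 - q := by linarith
  induction m with
  | zero => simp [cp]
  | succ m ih =>
    have hle : ∀ k : ℕ, 1 - q ≤ 1 - q ^ (k + 1) := fun k => by
      have := pow_le_of_le_one hq0.le hq1.le (Nat.succ_ne_zero k)
      simp only [Nat.succ_eq_add_one] at this
      linarith
    have h2 : (1 - q) ^ 2 ≤ (1 - q ^ (2 * m + 1)) * (1 - q ^ (2 * m + 2)) := by
      rw [sq]; exact mul_le_mul (hle _) (hle _) h1q.le (h1q.le.trans (hle _))
    have hcp := cp_pos hq0 hq1 hs m
    calc cp q s (m + 1) ≤ s * q ^ (2 * m) * cp q s m / (1 - q) ^ 2 := by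
          rw [cp]; gcongr
      _ ≤ s * q ^ (2 * m) * ((s / (1 - q) ^ 2) ^ m * q ^ (m * (m - 1))) / (1 - q) ^ 2 := by
          gcongr
      _ = _ := by
        have : (m + 1) * (m + 1 - 1) = 2 * m + m * (m - 1) := by
          rcases m with _ | m
          · simp
          · simp only [Nat.add_sub_cancel]; ring
        rw [this, pow_add]; ring

end trig

section trig2
variable {q s : ℝ}

noncomputable def cc (q s : ℝ) (m : ℕ) : ℝ := (-1) ^ m * cp q s m
noncomputable def tt (q s : ℝ) (m : ℕ) : ℝ := (-1) ^ m * tp q s m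

theorem abs_cc (hq0 : 0 < q) (hq1 : q < 1) (hs : 0 < s) (m : ℕ) : |cc q s m| = cp q s m := by
  rw [cc, abs_mul, abs_pow, abs_neg, abs_one, one_pow, one_mul, abs_of_pos (cp_pos hq0 hq1 hs m)]

theorem abs_tt (hq0 : 0 < q) (hq1 : q < 1) (hs : 0 < s) (m : ℕ) : |tt q s m| = tp q s m := by
  rw [tt, abs_mul, abs_pow, abs_neg, abs_one, one_pow, one_mul, abs_of_pos (tp_pos hq0 hq1 hs m)]

theorem tp_le (hq0 : 0 < q) (hq1 : q < 1) (hs : 0 < s) (m : ℕ) :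
    tp q s m ≤ (1 / (1 - q)) * ((s / (1 - q) ^ 2) ^ m * q ^ (m * (m - 1))) := by
  have h1q : 0 < 1 - q := by linarith
  have h : 1 - q ≤ 1 - q ^ (2 * m + 1) := by
    have := pow_le_of_le_one hq0.le hq1.le (Nat.succ_ne_zero (2 * m))
    simp only [Nat.succ_eq_add_one] at this
    linarith
  have hcp := cp_pos hq0 hq1 hs m
  calc tp q s m ≤ cp q s m / (1 - q) := by rw [tp]; gcongr
    _ ≤ ((s / (1 - q) ^ 2) ^ m * q ^ (m * (m - 1))) / (1 - q) := by
      gcongr; exact cp_le hq0 hq1 hs m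
    _ = _ := by ring

theorem ent_cc (hq0 : 0 < q) (hq1 : q < 1) (hs : 0 < s) : Ent (cc q s) := by
  have h1q : 0 < 1 - q := by linarith
  refine (ent_bound (K := s / (1 - q) ^ 2) (by positivity) hq0.le hq1).mono fun m => ?_
  rw [abs_cc hq0 hq1 hs]
  exact (cp_le hq0 hq1 hs m).trans (le_abs_self _)

theorem ent_tt (hq0 : 0 < q) (hq1 : q < 1) (hs : 0 < s) : Ent (tt q s) := by
  have h1q : 0 < 1 - q := by linarith
  have h := ent_bound (K := s / (1 - q) ^ 2) (by positivity) hq0.le hq1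
  intro x
  refine Summable.of_nonneg_of_le (fun m => by positivity) (fun m => ?_)
    ((h x).mul_left (1 / (1 - q)))
  rw [abs_tt hq0 hq1 hs, ← mul_assoc]
  gcongr
  refine (tp_le hq0 hq1 hs m).trans ?_
  gcongr
  exact le_abs_self _

theorem C_fun (hq0 : 0 < q) (hq1 : q < 1) (hs : 0 < s) (w : ℝ) :
    Ser (cc q s) w = Ser (cc q s) (q ^ 2 * w) - s * (w * Ser (tt q s) (q ^ 2 * w)) := by
  have hE := ent_cc hq0 hq1 hs
  have hT := ent_tt hq0 hq1 hs
  rw [eq_sub_iff_add_eq, ← eq_sub_iff_add_eq']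
  simp only [Ser]
  rw [← (hE.summable (q ^ 2 * w)).tsum_sub (hE.summable w),
    ((hE.summable (q ^ 2 * w)).sub (hE.summable w)).tsum_eq_zero_add, ← tsum_mul_left,
    ← tsum_mul_left]
  simp only [pow_zero, sub_self, zero_add]
  refine tsum_congr fun m => ?_
  have h := cp_fix (s := s) hq0 hq1 m
  simp only [cc, tt]
  have e : s * q ^ (2 * m) * tp q s m = cp q s (m + 1) - q ^ (2 * m + 2) * cp q s (m + 1) := by
    linarith
  calc s * (w * ((-1) ^ m * tp q s m * (q ^ 2 * w) ^ m))
      = (-1) ^ m * w ^ (m + 1) * (s * q ^ (2 * m) * tp q s m) := by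
        rw [mul_pow, ← pow_mul]; ring
    _ = _ := by
        rw [e, mul_pow, ← pow_mul]; ring

theorem T_fun (hq0 : 0 < q) (hq1 : q < 1) (hs : 0 < s) (w : ℝ) :
    Ser (tt q s) w = q * Ser (tt q s) (q ^ 2 * w) + Ser (cc q s) w := by
  have hE := ent_cc hq0 hq1 hs
  have hT := ent_tt hq0 hq1 hs
  simp only [Ser]
  rw [← tsum_mul_left, ← ((hT.summable (q ^ 2 * w)).mul_left q).tsum_add (hE.summable w)]
  refine tsum_congr fun m => ?_
  have h := tp_fix (s := s) hq0 hq1 m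
  simp only [cc, tt]
  calc (-1) ^ m * tp q s m * w ^ m
      = (-1) ^ m * w ^ m * (q ^ (2 * m + 1) * tp q s m + cp q s m) := by rw [← h]; ring
    _ = _ := by
        rw [mul_pow, ← pow_mul]; ring

theorem ser_scale {c : ℕ → ℝ} (hc : Ent c) (r w : ℝ) :
    HasDerivAt (fun w => Ser c (r * w)) (r * Ser (dco c) (r * w)) w := by
  have h1 : HasDerivAt (fun w : ℝ => r * w) r w := by simpa using (hasDerivAt_id w).const_mul r
  have := (hc.hasDerivAt (r * w)).comp w h1
  rw [mul_comm] at this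
  exact this

theorem C_fun' (hq0 : 0 < q) (hq1 : q < 1) (hs : 0 < s) (w : ℝ) :
    Ser (dco (cc q s)) w = q ^ 2 * Ser (dco (cc q s)) (q ^ 2 * w)
      - s * (Ser (tt q s) (q ^ 2 * w) + w * (q ^ 2 * Ser (dco (tt q s)) (q ^ 2 * w))) := by
  have hE := ent_cc hq0 hq1 hs
  have hT := ent_tt hq0 hq1 hs
  refine (hE.hasDerivAt w).unique ?_
  have h := (ser_scale hE (q ^ 2) w).sub
    (((hasDerivAt_id w).mul (ser_scale hT (q ^ 2) w)).const_mul s)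
  have h2 := h.congr_of_eventuallyEq (f₁ := Ser (cc q s))
    (Eventually.of_forall fun y => by rw [C_fun hq0 hq1 hs]; rfl)
  simpa using h2

theorem T_fun' (hq0 : 0 < q) (hq1 : q < 1) (hs : 0 < s) (w : ℝ) :
    Ser (dco (tt q s)) w = q * (q ^ 2 * Ser (dco (tt q s)) (q ^ 2 * w)) + Ser (dco (cc q s)) w := by
  have hE := ent_cc hq0 hq1 hs
  have hT := ent_tt hq0 hq1 hs
  refine (hT.hasDerivAt w).unique ?_
  have h := ((ser_scale hT (q ^ 2) w).const_mul q).add (hE.hasDerivAt w)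
  exact h.congr_of_eventuallyEq (f₁ := Ser (tt q s))
    (Eventually.of_forall fun y => by rw [T_fun hq0 hq1 hs]; rfl)

noncomputable def VV (q s w : ℝ) : ℝ := Ser (cc q s) w * Ser (tt q s) w +
  2 * w * (Ser (cc q s) w * Ser (dco (tt q s)) w - Ser (dco (cc q s)) w * Ser (tt q s) w)

theorem VV_step (hq0 : 0 < q) (hq1 : q < 1) (hs : 0 < s) (w : ℝ) :
    VV q s w = Ser (cc q s) w ^ 2 + s * q * w * Ser (tt q s) (q ^ 2 * w) ^ 2
      + q * VV q s (q ^ 2 * w) := by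
  have a := C_fun hq0 hq1 hs w
  have b := T_fun hq0 hq1 hs w
  have c := C_fun' hq0 hq1 hs w
  have d := T_fun' hq0 hq1 hs w
  simp only [VV]
  rw [d, b, c, a]
  ring

theorem ser_zero (c : ℕ → ℝ) : Ser c 0 = c 0 := by
  rw [Ser, tsum_eq_single 0]
  · simp
  · intro m hm; simp [hm]

theorem VV_pos (hq0 : 0 < q) (hq1 : q < 1) (hs : 0 < s) {w : ℝ} (hw : 0 < w) : 0 < VV q s w := by
  have hE := ent_cc hq0 hq1 hs
  have hT := ent_tt hq0 hq1 hs
  by_contra hcon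
  push Not at hcon
  have hn : ∀ n : ℕ, VV q s ((q ^ 2) ^ n * w) ≤ 0 := by
    intro n
    induction n with
    | zero => simpa using hcon
    | succ n ih =>
      have h := VV_step hq0 hq1 hs ((q ^ 2) ^ n * w)
      have e : q ^ 2 * ((q ^ 2) ^ n * w) = (q ^ 2) ^ (n + 1) * w := by ring
      rw [e] at h
      by_contra h2
      push Not at h2
      have : 0 < VV q s ((q ^ 2) ^ n * w) := by rw [h]; positivity
      linarith
  have hcont : ContinuousAt (VV q s) 0 := by
    have c1 := (hE.hasDerivAt 0).continuousAt
    have c2 := (hT.hasDerivAt 0).continuousAt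
    have c3 := (hE.dco.hasDerivAt 0).continuousAt
    have c4 := (hT.dco.hasDerivAt 0).continuousAt
    exact (c1.mul c2).add ((continuousAt_const.mul continuousAt_id).mul ((c1.mul c4).sub (c3.mul c2)))
  have hq2 : q ^ 2 < 1 := by nlinarith
  have hlim : Tendsto (fun n : ℕ => (q ^ 2) ^ n * w) atTop (𝓝 0) := by
    simpa using (tendsto_pow_atTop_nhds_zero_of_lt_one (by positivity) hq2).mul_const w
  have := le_of_tendsto (hcont.tendsto.comp hlim) (Eventually.of_forall hn)
  have h0 : VV q s 0 = tp q s 0 := by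
    simp [VV, ser_zero, cc, tt, cp]
  have := tp_pos hq0 hq1 hs 0
  linarith

theorem abs_sgn (m : ℕ) (x : ℝ) : |(-1) ^ m * x| = |x| := by
  rw [abs_mul, abs_pow, abs_neg, abs_one, one_pow, one_mul]

theorem sgn_sgn (m : ℕ) (x : ℝ) : (-1) ^ m * ((-1) ^ m * x) = x := by
  rw [← mul_assoc, ← mul_pow]; simp

theorem out_C (hq0 : 0 < q) (hq1 : q < 1) (hs : 0 < s) :
    Out (fun m => (2 * (m : ℝ) + (1 : ℕ)) / (1 : ℕ) * cc q s m) := by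
  have h1q : 0 < 1 - q := by linarith
  have hco : ∀ N m, (CT q s N).1.coeff m = (-1) ^ m * cN q s N m := fun N m => by
    rw [cN, sgn_sgn]
  have hP0 : ∀ N, (CT q s (N + 1)).1.coeff 0 = 1 := fun N => by rw [hco, cN_zero]; simp
  refine caseD (fun N => (CT q s (N + 1)).1) hP0 (fun N => posroots_of _ ?_ fun z hz h => ?_)
    (K := s / (1 - q) ^ 2) (by positivity) hq0.le hq1 (fun N m => ?_) (fun m => ?_) ?_ 1
    one_pos ?_
  · rw [hP0]; exact one_ne_zero
  · have := CT_im q s hq0 hs N z hz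
    rw [h] at this; simp at this
  · rw [hco, abs_sgn]
    obtain ⟨a, b, -⟩ := (CT_bounds hq0 hq1 hs (N + 1)).1 m
    rw [abs_of_nonneg a]
    exact b.trans (cp_le hq0 hq1 hs m)
  · simp_rw [hco]
    exact ((CT_lim hq0 hq1 hs m).1.comp (tendsto_add_atTop_nat 1)).const_mul _
  · have := cp_pos hq0 hq1 hs 1
    simp [cc, this]
  · intro w hw h1 h2
    have := VV_pos hq0 hq1 hs hw
    rw [VV, h1, h2] at this
    simp at this

theorem out_T (hq0 : 0 < q) (hq1 : q < 1) (hs : 0 < s) :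
    Out (fun m => (2 * (m : ℝ) + (2 : ℕ)) / (2 : ℕ) * (tt q s m / tt q s 0)) := by
  have h1q : 0 < 1 - q := by linarith
  have hco : ∀ N m, (CT q s N).2.coeff m = (-1) ^ m * tN q s N m := fun N m => by
    rw [tN, sgn_sgn]
  have hge : ∀ N, 1 ≤ tN q s (N + 1) 0 := fun N => by
    rw [tN_succ, cN_zero]
    have := ((CT_bounds hq0 hq1 hs N).2 0).1
    nlinarith [mul_nonneg (pow_nonneg hq0.le (2 * 0 + 1)) this]
  have hpos : ∀ N, 0 < tN q s (N + 1) 0 := fun N => by linarith [hge N]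
  have ht0 : tt q s 0 = tp q s 0 := by simp [tt]
  have htp := tp_pos hq0 hq1 hs 0
  have hco' : ∀ N m, (C (1 / tN q s (N + 1) 0) * (CT q s (N + 1)).2).coeff m =
      (-1) ^ m * (tN q s (N + 1) m / tN q s (N + 1) 0) := fun N m => by
    rw [coeff_C_mul, hco]; ring
  have hP0 : ∀ N, (C (1 / tN q s (N + 1) 0) * (CT q s (N + 1)).2).coeff 0 = 1 := fun N => by
    rw [hco']; simp [(hpos N).ne']
  refine caseD (fun N => C (1 / tN q s (N + 1) 0) * (CT q s (N + 1)).2) hP0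
    (fun N => posroots_of _ ?_ fun z hz h => ?_)
    (K := s / (1 - q) ^ 2 / (1 - q)) (by positivity) hq0.le hq1 (fun N m => ?_) (fun m => ?_) ?_ 2
    two_pos ?_
  · rw [hP0]; exact one_ne_zero
  · have := CT_im q s hq0 hs N z hz
    rw [map_mul, aeval_C] at h
    rcases mul_eq_zero.1 h with h | h
    · have h3 := (hpos N).ne'
      simp [h3] at h
    rw [h] at this; simp at this
  · rcases m with _ | m
    · rw [hP0]; simp
    rw [hco', abs_sgn]
    obtain ⟨a, b, -⟩ := (CT_bounds hq0 hq1 hs (N + 1)).2 (m + 1)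
    rw [abs_of_nonneg (div_nonneg a (hpos N).le)]
    refine (div_le_self a (hge N)).trans (b.trans ((tp_le hq0 hq1 hs _).trans ?_))
    rw [div_pow _ (1 - q), ← mul_assoc]
    gcongr
    rw [one_div, mul_comm, ← div_eq_mul_inv]
    gcongr
    exact pow_le_of_le_one h1q.le (by linarith) (Nat.succ_ne_zero m)
  · simp_rw [hco']
    have := (((CT_lim hq0 hq1 hs m).2.comp (tendsto_add_atTop_nat 1)).div
      ((CT_lim hq0 hq1 hs 0).2.comp (tendsto_add_atTop_nat 1)) htp.ne').const_mul ((-1) ^ m)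
    rw [ht0, tt, mul_div_assoc]
    exact this
  · have := tp_pos hq0 hq1 hs 1
    rw [ht0, tt, pow_one, neg_one_mul, neg_div]
    have := div_pos this htp
    linarith
  · intro w hw h1 h2
    have := VV_pos hq0 hq1 hs hw
    have e1 : ∀ w, Ser (fun m => tt q s m / tt q s 0) w = Ser (tt q s) w / tt q s 0 := fun w => by
      rw [Ser, Ser, ← tsum_div_const]
      exact tsum_congr fun m => by ring
    have e2 : ∀ w, Ser (dco fun m => tt q s m / tt q s 0) w = Ser (dco (tt q s)) w / tt q s 0 :=
      fun w => by
        rw [Ser, Ser, ← tsum_div_const]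
        exact tsum_congr fun m => by simp only [dco]; ring
    rw [e1] at h1
    rw [e2] at h2
    have h3 : tt q s 0 ≠ 0 := by rw [ht0]; exact htp.ne'
    rw [div_eq_zero_iff, or_iff_left h3] at h1 h2
    rw [VV, h1, h2] at this
    simp at this

end trig2

section final
variable {q : ℝ}

theorem poch_summable (hq0 : 0 < q) (hq1 : q < 1) (a : ℝ) :
    Summable (fun k : ℕ => ‖-(a * q ^ k)‖) := by
  have h := (summable_geometric_of_lt_one hq0.le hq1).mul_left |a|
  refine h.congr fun k => ?_
  rw [norm_neg, norm_mul, norm_pow, Real.norm_eq_abs, Real.norm_eq_abs, abs_of_pos hq0]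

theorem poch_ne (hq0 : 0 < q) (hq1 : q < 1) {a : ℝ} (ha0 : 0 < a) (ha : a < 1) :
    qPochInf a q ≠ 0 := by
  have h := tprod_one_add_ne_zero_of_summable (f := fun k : ℕ => -(a * q ^ k)) (fun k => ?_)
    (poch_summable hq0 hq1 a)
  · simpa only [qPochInf, sub_eq_add_neg] using h
  · have h1 : q ^ k ≤ 1 := pow_le_one₀ hq0.le hq1.le
    have h2 : 0 < q ^ k := by positivity
    have : a * q ^ k < 1 := by nlinarith
    intro h; linarith

theorem poch_succ (hq0 : 0 < q) (hq1 : q < 1) (a : ℝ) :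
    qPochInf a q = (1 - a) * qPochInf (a * q) q := by
  have hm : Multipliable (fun k : ℕ => 1 - a * q ^ (k + 1)) := by
    have := multipliable_one_add_of_summable (poch_summable hq0 hq1 (a * q))
    refine this.congr fun k => ?_
    ring
  have h := tprod_eq_zero_mul' (f := fun k : ℕ => 1 - a * q ^ k) hm
  have h2 : ∏' k : ℕ, (1 - a * q ^ (k + 1)) = ∏' k : ℕ, (1 - a * q * q ^ k) :=
    tprod_congr fun k => by ring
  unfold qPochInf
  rw [h, h2, pow_zero, mul_one]

theorem rpow_lt_one' (hq0 : 0 < q) (hq1 : q < 1) {x : ℝ} (hx : 0 < x) : 0 < 1 - q ^ x := by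
  linarith [Real.rpow_lt_one hq0.le hq1 hx]

theorem qGamma_ne (hq0 : 0 < q) (hq1 : q < 1) {x : ℝ} (hx : 0 < x) : qGamma q x ≠ 0 := by
  have h1q : 0 < 1 - q := by linarith
  refine div_ne_zero (mul_ne_zero (poch_ne hq0 hq1 hq0 hq1) (Real.rpow_pos_of_pos h1q _).ne')
    (poch_ne hq0 hq1 (Real.rpow_pos_of_pos hq0 _) (Real.rpow_lt_one hq0.le hq1 hx))

theorem qGamma_succ (hq0 : 0 < q) (hq1 : q < 1) {x : ℝ} (hx : 0 < x) :
    qGamma q (x + 1) = (1 - q ^ x) / (1 - q) * qGamma q x := by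
  have h1q : 0 < 1 - q := by linarith
  have hx1 : 0 < x + 1 := by linarith
  have h2 := rpow_lt_one' hq0 hq1 hx
  have h3 := poch_ne hq0 hq1 (Real.rpow_pos_of_pos hq0 _) (Real.rpow_lt_one hq0.le hq1 hx1)
  have e1 : (1 - q) ^ (1 - x) = (1 - q) ^ (1 - (x + 1)) * (1 - q) := by
    rw [← Real.rpow_add_one h1q.ne']; ring_nf
  rw [qGamma, qGamma, poch_succ hq0 hq1 (q ^ x), ← Real.rpow_add_one hq0.ne', e1]
  field_simp

noncomputable def be (q s c : ℝ) : ℕ → ℝ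
  | 0 => 1
  | m + 1 => s * q ^ (2 * m) / ((1 - q ^ (c + 2 * m)) * (1 - q ^ (c + 2 * m + 1))) * be q s c m

theorem be_pos (hq0 : 0 < q) (hq1 : q < 1) {s c : ℝ} (hs : 0 < s) (hc : 1 ≤ c) (m : ℕ) :
    0 < be q s c m := by
  induction m with
  | zero => simp [be]
  | succ m ih =>
    rw [be]
    have h1 := rpow_lt_one' hq0 hq1 (x := c + 2 * m) (by positivity)
    have h2 := rpow_lt_one' hq0 hq1 (x := c + 2 * m + 1) (by positivity)
    positivity

theorem be_le (hq0 : 0 < q) (hq1 : q < 1) {s c : ℝ} (hs : 0 < s) (hc : 1 ≤ c) (m : ℕ) :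
    be q s c m ≤ (s / (1 - q) ^ 2) ^ m * q ^ (m * (m - 1)) := by
  have h1q : 0 < 1 - q := by linarith
  induction m with
  | zero => simp [be]
  | succ m ih =>
    have hle : ∀ x : ℝ, 1 ≤ x → 1 - q ≤ 1 - q ^ x := fun x hx => by
      have := Real.rpow_le_rpow_of_exponent_ge hq0 hq1.le hx
      rw [Real.rpow_one] at this
      linarith
    have hm : (0 : ℝ) ≤ m := Nat.cast_nonneg m
    have h2 : (1 - q) ^ 2 ≤ (1 - q ^ (c + 2 * m)) * (1 - q ^ (c + 2 * m + 1)) := by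
      rw [sq]; exact mul_le_mul (hle _ (by linarith)) (hle _ (by linarith)) h1q.le
        (h1q.le.trans (hle _ (by linarith)))
    have hcp := be_pos hq0 hq1 hs hc m
    calc be q s c (m + 1) ≤ s * q ^ (2 * m) / (1 - q) ^ 2 * be q s c m := by
          rw [be]; gcongr
      _ ≤ s * q ^ (2 * m) / (1 - q) ^ 2 * ((s / (1 - q) ^ 2) ^ m * q ^ (m * (m - 1))) := by
          gcongr
      _ = _ := by
        have : (m + 1) * (m + 1 - 1) = 2 * m + m * (m - 1) := by
          rcases m with _ | m
          · simp
          · simp only [Nat.add_sub_cancel]; ring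
        rw [this, pow_add]; ring

theorem gam_be (hq0 : 0 < q) (hq1 : q < 1) {σ γ : ℝ} (hγ : 0 ≤ γ) (n : ℕ) :
    σ ^ (2 * n) * q ^ (n * (n - 1)) / qGamma q (2 * n + γ + 1) =
      be q (σ ^ 2 * (1 - q) ^ 2) (γ + 1) n / qGamma q (γ + 1) := by
  have h1q : 0 < 1 - q := by linarith
  induction n with
  | zero => simp [be]
  | succ n ih =>
    have hn : (0 : ℝ) ≤ n := Nat.cast_nonneg n
    have hx : 0 < 2 * (n : ℝ) + γ + 1 := by positivity
    have hg := qGamma_ne hq0 hq1 hx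
    have hg0 := qGamma_ne hq0 hq1 (x := γ + 1) (by positivity)
    have e1 := qGamma_succ hq0 hq1 hx
    have e2 := qGamma_succ hq0 hq1 (x := 2 * (n : ℝ) + γ + 1 + 1) (by positivity)
    have h1 := rpow_lt_one' hq0 hq1 hx
    have h2 := rpow_lt_one' hq0 hq1 (x := 2 * (n : ℝ) + γ + 1 + 1) (by positivity)
    have e3 : 2 * ((n + 1 : ℕ) : ℝ) + γ + 1 = 2 * (n : ℝ) + γ + 1 + 1 + 1 := by push_cast; ring
    have e4 : γ + 1 + 2 * (n : ℝ) = 2 * (n : ℝ) + γ + 1 := by ring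
    have e5 : (n + 1) * (n + 1 - 1) = 2 * n + n * (n - 1) := by
      rcases n with _ | m
      · simp
      · simp only [Nat.add_sub_cancel]; ring
    have e6 : be q (σ ^ 2 * (1 - q) ^ 2) (γ + 1) n =
        σ ^ (2 * n) * q ^ (n * (n - 1)) / qGamma q (2 * n + γ + 1) * qGamma q (γ + 1) := by
      rw [ih]; field_simp
    rw [e3, e2, e1, be, e4, e6, e5, pow_add]
    field_simp
    ring

theorem qMLR_eq (hq0 : 0 < q) (hq1 : q < 1) {σ γ : ℝ} (hγ : 0 ≤ γ) (x : ℝ) :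
    qMLR γ σ q x = (qGamma q (γ + 1))⁻¹ *
      Ser (fun m => (-1) ^ m * be q (σ ^ 2 * (1 - q) ^ 2) (γ + 1) m) (x ^ 2) := by
  rw [qMLR, Ser, ← tsum_mul_left]
  refine tsum_congr fun n => ?_
  rw [mul_assoc ((-1) ^ n), mul_div_assoc, gam_be hq0 hq1 hγ, pow_mul]
  ring

theorem deriv_psi (hq0 : 0 < q) (hq1 : q < 1) {σ γ : ℝ} (hσ : 0 < σ) (hγ : 0 ≤ γ) {x : ℝ}
    (hx : 0 < x) :
    deriv (fun x : ℝ => x ^ (γ + 1) * qMLR γ σ q x) x =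
      (qGamma q (γ + 1))⁻¹ * (γ + 1) * x ^ γ *
        Ser (fun m => (2 * (m : ℝ) + (γ + 1)) / (γ + 1) *
          ((-1) ^ m * be q (σ ^ 2 * (1 - q) ^ 2) (γ + 1) m)) (x ^ 2) := by
  have h1q : 0 < 1 - q := by linarith
  have hs : 0 < σ ^ 2 * (1 - q) ^ 2 := by positivity
  have hc : 1 ≤ γ + 1 := by linarith
  have hE : Ent (fun m => (-1) ^ m * be q (σ ^ 2 * (1 - q) ^ 2) (γ + 1) m) := by
    refine (ent_bound (K := σ ^ 2 * (1 - q) ^ 2 / (1 - q) ^ 2) (by positivity) hq0.le hq1).mono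
      fun m => ?_
    rw [abs_sgn, abs_of_pos (be_pos hq0 hq1 hs hc m)]
    exact (be_le hq0 hq1 hs hc m).trans (le_abs_self _)
  rw [ser_thetaR hE (γ + 1) (by positivity)]
  set a : ℕ → ℝ := fun m => (-1) ^ m * be q (σ ^ 2 * (1 - q) ^ 2) (γ + 1) m with ha
  have h1 : HasDerivAt (fun x : ℝ => x ^ (γ + 1)) ((γ + 1) * x ^ (γ + 1 - 1)) x :=
    Real.hasDerivAt_rpow_const (Or.inl hx.ne')
  have h2 : HasDerivAt (fun x : ℝ => (qGamma q (γ + 1))⁻¹ * Ser a (x ^ 2))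
      ((qGamma q (γ + 1))⁻¹ * (Ser (dco a) (x ^ 2) * (2 * x))) x := by
    have hp : HasDerivAt (fun x : ℝ => x ^ 2) (2 * x) x := by
      simpa using hasDerivAt_pow 2 x
    exact ((hE.hasDerivAt (x ^ 2)).comp x hp).const_mul _
  have h3 := h1.mul h2
  have hfun : (fun x : ℝ => x ^ (γ + 1) * qMLR γ σ q x) =
      (fun x : ℝ => x ^ (γ + 1)) * (fun x : ℝ => (qGamma q (γ + 1))⁻¹ * Ser a (x ^ 2)) := by
    ext y
    rw [qMLR_eq hq0 hq1 hγ]; rfl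
  rw [hfun, h3.deriv, Real.rpow_add_one hx.ne', add_sub_cancel_right]
  have : γ + 1 ≠ 0 := by positivity
  field_simp

theorem be_one (s : ℝ) (m : ℕ) : be q s 1 m = cp q s m := by
  induction m with
  | zero => simp [be, cp]
  | succ m ih =>
    have e1 : q ^ ((1 : ℝ) + 2 * m) = q ^ (2 * m + 1) := by
      rw [← Real.rpow_natCast]; push_cast; ring_nf
    have e2 : q ^ ((1 : ℝ) + 2 * m + 1) = q ^ (2 * m + 2) := by
      rw [← Real.rpow_natCast]; push_cast; ring_nf
    rw [be, cp, e1, e2, ih]; ring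

theorem be_two (hq0 : 0 < q) (hq1 : q < 1) {s : ℝ} (hs : 0 < s) (m : ℕ) :
    be q s 2 m = tp q s m / tp q s 0 := by
  have ht := tp_pos hq0 hq1 hs 0
  induction m with
  | zero => simp [be, ht.ne']
  | succ m ih =>
    have e1 : q ^ ((2 : ℝ) + 2 * m) = q ^ (2 * m + 2) := by
      rw [← Real.rpow_natCast]; push_cast; ring_nf
    have e2 : q ^ ((2 : ℝ) + 2 * m + 1) = q ^ (2 * m + 3) := by
      rw [← Real.rpow_natCast]; push_cast; ring_nf
    have h1 := one_sub_pow_pos hq0 hq1 (2 * m)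
    have h2 := one_sub_pow_pos hq0 hq1 (2 * m + 1)
    have h3 := one_sub_pow_pos hq0 hq1 (2 * m + 2)
    rw [be, e1, e2, ih]
    have e3 : tp q s (m + 1) = s * q ^ (2 * m) /
        ((1 - q ^ (2 * m + 2)) * (1 - q ^ (2 * m + 3))) * tp q s m := by
      have e4 : cp q s (m + 1) = s * q ^ (2 * m) * cp q s m /
        ((1 - q ^ (2 * m + 1)) * (1 - q ^ (2 * m + 2))) := rfl
      rw [tp, tp, e4, show 2 * (m + 1) + 1 = 2 * m + 3 by ring]
      field_simp
    rw [e3]; ring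

theorem three_pow_bound (c : ℝ) (hc : 1 ≤ c) (m : ℕ) : (2 * (m : ℝ) + c) / c ≤ 3 ^ m := by
  have hc' : 0 < c := by linarith
  rw [div_le_iff₀ hc']
  have h3 : (1 : ℝ) + m * 2 ≤ (1 + 2) ^ m := one_add_mul_le_pow (by norm_num) m
  norm_num at h3
  have h4 : (0 : ℝ) ≤ m := Nat.cast_nonneg m
  nlinarith [mul_nonneg h4 (sub_nonneg.2 hc), mul_le_mul_of_nonneg_right h3 hc'.le]

theorem out_R (hq0 : 0 < q) (hq1 : q < 1) (hq2 : q < 1 / 2) {s c : ℝ} (hs : 0 < s) (hc : 1 ≤ c) :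
    Out (fun m => (-1) ^ m * ((2 * (m : ℝ) + c) / c * be q s c m)) := by
  have h1q : 0 < 1 - q := by linarith
  have hc' : 0 < c := by linarith
  have hA : ∀ m : ℕ, 0 < 1 - q ^ (c + 2 * m) := fun m => rpow_lt_one' hq0 hq1 (by positivity)
  have hB : ∀ m : ℕ, 0 < 1 - q ^ (c + 2 * m + 1) := fun m => rpow_lt_one' hq0 hq1 (by positivity)
  refine hutchinson (τ := fun m : ℕ => (2 * (m : ℝ) + 2 + c) / (2 * m + c) *
    (s * q ^ (2 * m) / ((1 - q ^ (c + 2 * m)) * (1 - q ^ (c + 2 * m + 1)))))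
    (K := 3 * (s / (1 - q) ^ 2)) (ρ := q) (fun m => ?_) (fun m => ?_) ?_ (fun m => ?_)
    (by positivity) hq0.le hq1 (fun m => ?_)
  · have := hA m
    have := hB m
    positivity
  · have a1 := hA m
    have b1 := hB m
    have hm : (0 : ℝ) ≤ m := Nat.cast_nonneg m
    have a2 : 1 - q ^ (c + 2 * (m : ℝ)) ≤ 1 - q ^ (c + 2 * ((m + 1 : ℕ) : ℝ)) := by
      have := Real.rpow_le_rpow_of_exponent_ge hq0 hq1.le
        (show c + 2 * (m : ℝ) ≤ c + 2 * ((m + 1 : ℕ) : ℝ) by push_cast; linarith)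
      linarith
    have b2 : 1 - q ^ (c + 2 * (m : ℝ) + 1) ≤ 1 - q ^ (c + 2 * ((m + 1 : ℕ) : ℝ) + 1) := by
      have := Real.rpow_le_rpow_of_exponent_ge hq0 hq1.le
        (show c + 2 * (m : ℝ) + 1 ≤ c + 2 * ((m + 1 : ℕ) : ℝ) + 1 by push_cast; linarith)
      linarith
    have r : (2 * ((m + 1 : ℕ) : ℝ) + 2 + c) / (2 * ((m + 1 : ℕ) : ℝ) + c) ≤
        (2 * (m : ℝ) + 2 + c) / (2 * m + c) := by
      rw [div_le_div_iff₀ (by positivity) (by positivity)]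
      push_cast
      nlinarith
    have hq4 : q ^ 2 < 1 / 4 := by nlinarith
    have a3 := hA (m + 1)
    have b3 := hB (m + 1)
    set A := 1 - q ^ (c + 2 * (m : ℝ))
    set B := 1 - q ^ (c + 2 * (m : ℝ) + 1)
    set R := (2 * (m : ℝ) + 2 + c) / (2 * m + c)
    have hRp : 0 < R := by positivity
    have hAB : A * B ≤ (1 - q ^ (c + 2 * ((m + 1 : ℕ) : ℝ))) *
        (1 - q ^ (c + 2 * ((m + 1 : ℕ) : ℝ) + 1)) := mul_le_mul a2 b2 b1.le a3.le
    have hd : s * q ^ (2 * (m + 1)) / ((1 - q ^ (c + 2 * ((m + 1 : ℕ) : ℝ))) *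
        (1 - q ^ (c + 2 * ((m + 1 : ℕ) : ℝ) + 1))) ≤ s * q ^ (2 * (m + 1)) / (A * B) :=
      div_le_div_of_nonneg_left (by positivity) (by positivity) hAB
    calc _ ≤ R * (s * q ^ (2 * (m + 1)) / (A * B)) :=
          mul_le_mul r hd (div_pos (by positivity) (mul_pos a3 b3)).le hRp.le
      _ = (R * (s * q ^ (2 * m) / (A * B))) * q ^ 2 := by ring
      _ < (R * (s * q ^ (2 * m) / (A * B))) * (1 / 4) := by gcongr
      _ = _ := by ring
  · simp [be, hc'.ne']
  · have a1 := hA m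
    have b1 := hB m
    have hm : 0 < 2 * (m : ℝ) + c := by positivity
    simp only [be]
    push_cast
    field_simp
  · rw [mul_pow, mul_assoc]
    have := be_pos hq0 hq1 hs hc m
    exact mul_le_mul (three_pow_bound c hc m) (be_le hq0 hq1 hs hc m) this.le (by positivity)

theorem out_all (hq0 : 0 < q) (hq1 : q < 1) {s γ : ℝ} (hs : 0 < s) (hγ : 0 ≤ γ)
    (hR : condR q γ) :
    Out (fun m => (2 * (m : ℝ) + (γ + 1)) / (γ + 1) * ((-1) ^ m * be q s (γ + 1) m)) := by
  rcases hR with (rfl | rfl) | ⟨-, -, h⟩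
  · convert out_C hq0 hq1 hs using 2 with m
    rw [zero_add, be_one, cc]
    simp
  · convert out_T hq0 hq1 hs using 2 with m
    rw [show (1 : ℝ) + 1 = 2 by norm_num, be_two hq0 hq1 hs, tt, tt, pow_zero, one_mul]
    push_cast
    ring
  · have h1q : 0 < 1 - q := by linarith
    have hq2 : q < 1 / 2 := by
      have a1 := rpow_lt_one' hq0 hq1 (x := γ + 1) (by positivity)
      have b1 := rpow_lt_one' hq0 hq1 (x := γ + 2) (by positivity)
      have a2 : 1 - q ^ (γ + 1) ≤ 1 := by linarith [Real.rpow_pos_of_pos hq0 (γ + 1)]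
      have b2 : 1 - q ^ (γ + 2) ≤ 1 := by linarith [Real.rpow_pos_of_pos hq0 (γ + 2)]
      have : 1 < q⁻¹ * (1 - q) * 1 * 1 := h.trans_le (by gcongr)
      rw [mul_one, mul_one, inv_mul_eq_div, lt_div_iff₀ hq0] at this
      linarith
    convert out_R hq0 hq1 hq2 hs (show 1 ≤ γ + 1 by linarith) using 2 with m
    ring

end final

theorem stmt12_aux (q σ γ : ℝ) (hq0 : 0 < q) (hq1 : q < 1) (hσ : 0 < σ)
    (hγ0 : 0 ≤ γ) (hR : condR q γ)
    (ξ : ℕ → ℝ) (hξmono : StrictMono ξ) (hξpos : ∀ n, 0 < ξ n)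
    (hξzero : ∀ n, deriv (fun x : ℝ => x ^ (γ + 1) * qMLR γ σ q x) (ξ n) = 0)
    (hξall : ∀ x : ℝ, 0 < x →
      deriv (fun x : ℝ => x ^ (γ + 1) * qMLR γ σ q x) x = 0 → ∃ n, x = ξ n) :
    (∑' n : ℕ, (ξ n ^ 2)⁻¹) =
      σ ^ 2 * (γ + 3) * qGamma q (γ + 1) / ((γ + 1) * qGamma q (γ + 3)) ∧
    (∑' n : ℕ, (ξ n ^ 4)⁻¹) =
      σ ^ 4 * (γ + 3) ^ 2 * qGamma q (γ + 1) ^ 2 /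
          ((γ + 1) ^ 2 * qGamma q (γ + 3) ^ 2) -
        2 * σ ^ 4 * q ^ 2 * (γ + 5) * qGamma q (γ + 1) /
          ((γ + 1) * qGamma q (γ + 5)) := by
  have h1q : 0 < 1 - q := by linarith
  have hs : 0 < σ ^ 2 * (1 - q) ^ 2 := by positivity
  have hc : γ + 1 ≠ 0 := by positivity
  have hg1 := qGamma_ne hq0 hq1 (x := γ + 1) (by positivity)
  have hg3 := qGamma_ne hq0 hq1 (x := γ + 3) (by positivity)
  have hg5 := qGamma_ne hq0 hq1 (x := γ + 5) (by positivity)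
  obtain ⟨u, E, hu0, s1, s2, hup, hz, hinj⟩ := out_all hq0 hq1 hs hγ0 hR
  have key : ∀ x : ℝ, 0 < x → (deriv (fun x : ℝ => x ^ (γ + 1) * qMLR γ σ q x) x = 0 ↔
      Ser (fun m => (2 * (m : ℝ) + (γ + 1)) / (γ + 1) *
          ((-1) ^ m * be q (σ ^ 2 * (1 - q) ^ 2) (γ + 1) m)) (x ^ 2) = 0) := by
    intro x hx
    rw [deriv_psi hq0 hq1 hσ hγ0 hx, mul_eq_zero, or_iff_right]
    exact mul_ne_zero (mul_ne_zero (inv_ne_zero hg1) hc) (Real.rpow_pos_of_pos hx _).ne'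
  obtain ⟨r1, r2⟩ := lemmaE hup hz hu0 hinj hξmono hξpos
    (fun n => (key _ (hξpos n)).1 (hξzero n)) (fun x hx h => hξall x hx ((key x hx).2 h))
  have b1 := gam_be hq0 hq1 (σ := σ) hγ0 1
  have b2 := gam_be hq0 hq1 (σ := σ) hγ0 2
  have e1 : 2 * ((1 : ℕ) : ℝ) + γ + 1 = γ + 3 := by push_cast; ring
  have e2 : 2 * ((2 : ℕ) : ℝ) + γ + 1 = γ + 5 := by push_cast; ring
  rw [e1, eq_div_iff hg1] at b1
  rw [e2, eq_div_iff hg1] at b2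
  rw [r1, r2, s1, s2]
  beta_reduce
  rw [← b1, ← b2]
  push_cast
  constructor
  · field_simp
    ring
  · field_simp
    ring

end Helpers

theorem stmt12 (q σ γ : ℝ) (hq0 : 0 < q) (hq1 : q < 1) (hσ : 0 < σ)
    (hγ0 : 0 ≤ γ) (hγ2 : γ < 2) (hR : condR q γ)
    (ξ : ℕ → ℝ) (hξmono : StrictMono ξ) (hξpos : ∀ n, 0 < ξ n)
    (hξzero : ∀ n, deriv (fun x : ℝ => x ^ (γ + 1) * qMLR γ σ q x) (ξ n) = 0)
    (hξall : ∀ x : ℝ, 0 < x →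
      deriv (fun x : ℝ => x ^ (γ + 1) * qMLR γ σ q x) x = 0 → ∃ n, x = ξ n) :
    (∑' n : ℕ, (ξ n ^ 2)⁻¹) =
      σ ^ 2 * (γ + 3) * qGamma q (γ + 1) / ((γ + 1) * qGamma q (γ + 3)) ∧
    (∑' n : ℕ, (ξ n ^ 4)⁻¹) =
      σ ^ 4 * (γ + 3) ^ 2 * qGamma q (γ + 1) ^ 2 /
          ((γ + 1) ^ 2 * qGamma q (γ + 3) ^ 2) -
        2 * σ ^ 4 * q ^ 2 * (γ + 5) * qGamma q (γ + 1) /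
          ((γ + 1) * qGamma q (γ + 5)) := by
  exact stmt12_aux q σ γ hq0 hq1 hσ hγ0 hR ξ hξmono hξpos hξzero hξall
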